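/- Let n > 1 be an integer. There exist infinitely many pairwise non-isomorphic number fields K with the following properties: there is a positive integer y with y ≡ 1 (mod 12), y not divisible by 5, and y not divisible by 7, such that the polynomial x⁴ + ((yⁿ−25)/6)x³ + 2x² − ((yⁿ−25)/6)x + 1 is irreducible over ℚ and K is its splitting field; K is a totally real Galois extension of ℚ of degree 4 with Galois group isomorphic to (ℤ/2ℤ)²; and rank_n Cl(K) ≥ 3. -/

import Mathlib

open Polynomial NumberField

/-- `M` contains a subgroup isomorphic to `(ℤ/nℤ)^s`, i.e. `rank_n M ≥ s`. -/
def HasZModRankGE (M : Type*) [CommGroup M] (n s : ℕ) : Prop :=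
  ∃ φ : (Multiplicative (Fin s → ZMod n)) →* M, Function.Injective φ

/-- A number field (here a subfield of `ℂ`) is totally real if all of its complex
embeddings take real values. -/
def TotallyReal (K : Type*) [Field K] : Prop :=
  ∀ (φ : K →+* ℂ) (x : K), (φ x).im = 0

/-!
Write `yⁿ = 12 m + 25`. The quartic `x⁴ + 2 m x³ + 2 x² - 2 m x + 1` takes the value `yⁿ` at `2`,
and its roots `x₁, …, x₄` are units in a totally real biquadratic field `K`. As `y` is prime to
`35`, the numbers `xᵢ - 2` are pairwise coprime with product `yⁿ`, hence `(xᵢ - 2) = Iᵢⁿ`; the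
classes of `I₁, I₂, I₃` generate the subgroup.

These classes are independent because `K` has unit rank only `3`. Let `p ∣ n` be prime. Modulo a
prime `q ∣ y`, the quartic splits with roots `3`, `-1/3`, `-1/2`, `2`, so if a monomial in `x₁`,
`x₃`, `u = (x₁ + x₂) / 2` and the `xᵢ - 2` is a `p`-th power in `K`, then so is an explicit monomial
in `2, 3, 5, 7` modulo `q`. Letting `y` be divisible by enough primes forces the exponents to vanish
modulo `p`. Hence `x₁, x₃, u` generate the units modulo `p`-th powers and `±1`, and no nontrivial
monomial in the `Iᵢ` is principal.

That enough primes exist is the local-global principle for `p`-th powers of integers: if `N` were a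
`p`-th power modulo all large primes but not in `ℤ`, then `ℤ[X] / (X ^ p - N)` would have `p` ring
homomorphisms to `𝔽_q` for almost every `q ≡ 1 (mod p)`. An order in a number field has at most one
homomorphism to `𝔽_q` on average over `q`, as one sees by bounding the norms of the differences of
the elements of a box, so this contradicts the density `1 / (p - 1)` of these primes.

For infinitude, every large prime `q ∣ y` has a factor of degree one in `K`, so `y` can be chosen
such that `K` avoids any given finite set of fields.
-/
section RingHomToZMod

variable {R : Type*} [CommRing R] {q : ℕ} [Fact q.Prime]

theorem ringHom_zmod_eq_of_ker_le {φ ψ : R →+* ZMod q} (h : RingHom.ker φ ≤ RingHom.ker ψ) :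
    φ = ψ := by
  ext r
  have hr : r - ((φ r).val : R) ∈ RingHom.ker φ := by simp [RingHom.mem_ker]
  have hψ : ψ r = φ r := by simpa [RingHom.mem_ker, sub_eq_zero] using h hr
  exact hψ.symm

theorem pi_ringHom_zmod_surjective (Φ : Finset (R →+* ZMod q)) :
    Function.Surjective (RingHom.pi fun φ : Φ ↦ φ.1) := by
  intro x
  have hmax (φ : R →+* ZMod q) : (RingHom.ker φ).IsMaximal :=
    RingHom.ker_isMaximal_of_surjective φ (ZMod.ringHom_surjective φ)
  have hcop : Pairwise fun φ ψ : Φ ↦ IsCoprime (RingHom.ker φ.1) (RingHom.ker ψ.1) :=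
    fun φ ψ hne ↦ Ideal.isCoprime_iff_sup_eq.2 <| (hmax φ.1).coprime_of_ne (hmax ψ.1)
      fun h ↦ hne (Subtype.ext (ringHom_zmod_eq_of_ker_le h.le))
  obtain ⟨r, hr⟩ := Ideal.exists_forall_sub_mem_ideal hcop fun φ ↦ ((x φ).val : R)
  refine ⟨r, funext fun φ ↦ ?_⟩
  simpa [RingHom.mem_ker, sub_eq_zero] using hr φ

variable [Module.Free ℤ R] [Module.Finite ℤ R]

theorem finite_ringHom_zmod : Finite (R →+* ZMod q) := by
  let b := Module.Free.chooseBasis ℤ R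
  refine Finite.of_injective (fun (φ : R →+* ZMod q) i ↦ φ (b i)) fun φ ψ h ↦ ?_
  have hlin : φ.toAddMonoidHom.toIntLinearMap = ψ.toAddMonoidHom.toIntLinearMap :=
    b.ext fun i ↦ congrFun h i
  exact RingHom.ext fun r ↦ congrArg (fun f ↦ f r) hlin

variable [IsDomain R]

theorem pow_card_dvd_natAbs_norm {v : R} (hv : v ≠ 0) {Φ : Finset (R →+* ZMod q)}
    (hΦ : ∀ φ ∈ Φ, φ v = 0) : q ^ Φ.card ∣ (Algebra.norm ℤ v).natAbs := by
  let mulV : R →ₗ[ℤ] R := Algebra.lmul ℤ R v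
  have hinj : Function.Injective mulV := mul_right_injective₀ hv
  have hnorm : (Algebra.norm ℤ v).natAbs = Nat.card (R ⧸ LinearMap.range mulV) :=
    Submodule.natAbs_det_equiv _ (LinearEquiv.ofInjective mulV hinj)
  let eval : R →ₗ[ℤ] Φ → ZMod q := (RingHom.pi fun φ : Φ ↦ φ.1).toAddMonoidHom.toIntLinearMap
  have hker : LinearMap.range mulV ≤ LinearMap.ker eval := by
    rintro _ ⟨c, rfl⟩
    exact funext fun φ ↦ (map_mul φ.1 v c).trans (by simp [hΦ φ.1 φ.2])
  have hsurj : Function.Surjective ((LinearMap.range mulV).liftQ eval hker) := fun x ↦ by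
    obtain ⟨r, hr⟩ := pi_ringHom_zmod_surjective Φ x
    exact ⟨Submodule.Quotient.mk r, hr⟩
  have hdvd := AddSubgroup.card_dvd_of_surjective
    ((LinearMap.range mulV).liftQ eval hker).toAddMonoidHom hsurj
  classical
  simpa [hnorm, Nat.card_pi] using hdvd

theorem pow_natCard_dvd_natAbs_norm {v : R} (hv : v ≠ 0) :
    q ^ Nat.card {φ : R →+* ZMod q // φ v = 0} ∣ (Algebra.norm ℤ v).natAbs := by
  classical
  have := finite_ringHom_zmod (R := R) (q := q)
  have := Fintype.ofFinite (R →+* ZMod q)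
  rw [Nat.card_eq_fintype_card, Fintype.card_subtype]
  exact pow_card_dvd_natAbs_norm hv fun φ hφ ↦ (Finset.mem_filter.1 hφ).2

theorem natCard_ringHom_zmod_le_finrank :
    Nat.card (R →+* ZMod q) ≤ Module.finrank ℤ R := by
  have hq := (Fact.out : q.Prime)
  have hq0 : (q : R) ≠ 0 := by
    simpa using smul_ne_zero (Nat.cast_ne_zero.2 hq.ne_zero : (q : ℤ) ≠ 0) (one_ne_zero (α := R))
  have hdvd := pow_natCard_dvd_natAbs_norm (q := q) hq0
  have hcard : Nat.card {φ : R →+* ZMod q // φ q = 0} = Nat.card (R →+* ZMod q) :=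
    Nat.card_congr (Equiv.subtypeUnivEquiv fun φ ↦ by simp)
  rw [hcard, show (q : R) = algebraMap ℤ R q by simp, Algebra.norm_algebraMap, Int.natAbs_pow,
    Int.natAbs_natCast] at hdvd
  exact (Nat.pow_dvd_pow_iff_le_right hq.one_lt).1 hdvd

theorem sum_natCard_ringHom_mul_log_le_log_norm {a : R} (ha : a ≠ 0) {P : Finset ℕ}
    (hP : ∀ q ∈ P, q.Prime) :
    ∑ q ∈ P, Nat.card {φ : R →+* ZMod q // φ a = 0} * Real.log q ≤
      Real.log (Algebra.norm ℤ a).natAbs := by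
  have hdvd : ∏ q ∈ P, q ^ Nat.card {φ : R →+* ZMod q // φ a = 0} ∣
      (Algebra.norm ℤ a).natAbs := by
    refine Finset.prod_dvd_of_isRelPrime (fun q hq q' hq' hne ↦ ?_) fun q hq ↦ ?_
    · exact Nat.coprime_iff_isRelPrime.1
        (((Nat.coprime_primes (hP q hq) (hP q' hq')).2 hne).pow _ _)
    · have : Fact q.Prime := ⟨hP q hq⟩
      exact pow_natCard_dvd_natAbs_norm ha
  have hpos : ∀ q ∈ P, (q : ℝ) ^ Nat.card {φ : R →+* ZMod q // φ a = 0} ≠ 0 :=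
    fun q hq ↦ pow_ne_zero _ (Nat.cast_ne_zero.2 (hP q hq).ne_zero)
  calc ∑ q ∈ P, Nat.card {φ : R →+* ZMod q // φ a = 0} * Real.log q
      = Real.log (∏ q ∈ P, q ^ Nat.card {φ : R →+* ZMod q // φ a = 0} : ℕ) := by
        push_cast
        rw [Real.log_prod hpos]
        simp only [Real.log_pow]
    _ ≤ Real.log (Algebra.norm ℤ a).natAbs := by
        refine Real.log_le_log ?_ ?_
        · exact_mod_cast Finset.prod_pos fun q hq ↦ pow_pos (hP q hq).pos _
        · exact_mod_cast Nat.le_of_dvd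
            (Int.natAbs_pos.2 (Algebra.norm_ne_zero_iff.2 ha)) hdvd

end RingHomToZMod

theorem sq_card_le_mul_card_add_card_collisions {V Z : Type*} [Fintype Z] [DecidableEq Z]
    (s : Finset V) (g : V → Z) :
    s.card ^ 2 ≤ Fintype.card Z * (s.card + (s.offDiag.filter fun x ↦ g x.1 = g x.2).card) := by
  classical
  have hfib (z : Z) : (s.filter (g · = z)).card ^ 2 =
      ((s ×ˢ s).filter fun x ↦ g x.1 = z ∧ g x.2 = z).card := by
    rw [sq, ← Finset.card_product, ← Finset.filter_product]
  have hsq : ∑ z, (s.filter (g · = z)).card ^ 2 =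
      ((s ×ˢ s).filter fun x ↦ g x.1 = g x.2).card := by
    rw [Finset.card_eq_sum_card_fiberwise (f := fun x : V × V ↦ g x.1) (t := Finset.univ)
      fun _ _ ↦ Finset.mem_coe.2 (Finset.mem_univ _)]
    refine Finset.sum_congr rfl fun z _ ↦ (hfib z).trans ?_
    rw [Finset.filter_filter]
    exact congrArg _ (Finset.filter_congr fun x _ ↦ by grind)
  have hdiag : ((s ×ˢ s).filter fun x ↦ g x.1 = g x.2).card =
      s.card + (s.offDiag.filter fun x ↦ g x.1 = g x.2).card := by
    rw [← Finset.diag_union_offDiag, Finset.filter_union, Finset.card_union_of_disjoint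
      (Finset.disjoint_filter_filter (Finset.disjoint_diag_offDiag s)),
      Finset.filter_true_of_mem fun x hx ↦ by rw [(Finset.mem_diag.1 hx).2], Finset.diag_card]
  calc s.card ^ 2 = (∑ z, (s.filter (g · = z)).card) ^ 2 := by
        rw [Finset.card_eq_sum_card_fiberwise fun x _ ↦ Finset.mem_coe.2 (Finset.mem_univ (g x))]
    _ ≤ Fintype.card Z * ∑ z, (s.filter (g · = z)).card ^ 2 := sq_sum_le_card_mul_sum_sq
    _ = _ := by rw [hsq, hdiag]

section RingHomDensity

variable {R : Type*} [CommRing R] [Module.Free ℤ R] [Module.Finite ℤ R]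

theorem natCard_ringHom_mul_le_sum_offDiag {q : ℕ} [Fact q.Prime]
    (V : Finset R) (hV : V.Nonempty) :
    (V.card : ℝ) ^ 2 * (Nat.card (R →+* ZMod q) * (1 / q - 1 / V.card)) ≤
      ∑ x ∈ V.offDiag, (Nat.card {φ : R →+* ZMod q // φ (x.1 - x.2) = 0} : ℝ) := by
  have := finite_ringHom_zmod (R := R) (q := q)
  have := Fintype.ofFinite (R →+* ZMod q)
  have hq : (0 : ℝ) < q := Nat.cast_pos.2 (Fact.out : q.Prime).pos
  have := hV.card_ne_zero
  have hcoll (φ : R →+* ZMod q) : (V.card : ℝ) ^ 2 * (1 / q - 1 / V.card) ≤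
      (V.offDiag.filter fun x ↦ φ x.1 = φ x.2).card := by
    have h := sq_card_le_mul_card_add_card_collisions V φ
    rw [ZMod.card] at h
    have h' : (V.card : ℝ) ^ 2 ≤
        q * (V.card + (V.offDiag.filter fun x ↦ φ x.1 = φ x.2).card) := by exact_mod_cast h
    rw [← div_le_iff₀' hq] at h'
    calc (V.card : ℝ) ^ 2 * (1 / q - 1 / V.card) = V.card ^ 2 / q - V.card := by field_simp
      _ ≤ _ := by linarith
  calc (V.card : ℝ) ^ 2 * (Nat.card (R →+* ZMod q) * (1 / q - 1 / V.card))
      = ∑ _φ : R →+* ZMod q, (V.card : ℝ) ^ 2 * (1 / q - 1 / V.card) := by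
        rw [Finset.sum_const, Finset.card_univ, nsmul_eq_mul, Nat.card_eq_fintype_card]
        ring
    _ ≤ ∑ φ : R →+* ZMod q, ((V.offDiag.filter fun x ↦ φ x.1 = φ x.2).card : ℝ) :=
        Finset.sum_le_sum fun φ _ ↦ hcoll φ
    _ = ∑ x ∈ V.offDiag, (Nat.card {φ : R →+* ZMod q // φ (x.1 - x.2) = 0} : ℝ) := by
        simp only [Finset.card_filter, Nat.card_eq_fintype_card, Fintype.card_subtype, map_sub,
          sub_eq_zero, Nat.cast_sum]
        exact Finset.sum_comm

variable [IsDomain R]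

theorem sum_natCard_ringHom_le_log_of_norm_sub_le {V : Finset R} (hV : V.Nonempty) {B : ℕ}
    (hB : ∀ v ∈ V, ∀ w ∈ V, (Algebra.norm ℤ (v - w)).natAbs ≤ B) {P : Finset ℕ}
    (hP : ∀ q ∈ P, q.Prime) :
    ∑ q ∈ P, Nat.card (R →+* ZMod q) * (1 / q - 1 / V.card) * Real.log q ≤ Real.log B := by
  classical
  have hcard : (0 : ℝ) < V.card := Nat.cast_pos.2 hV.card_pos
  have hpair : ∀ x ∈ V.offDiag,
      ∑ q ∈ P, Nat.card {φ : R →+* ZMod q // φ (x.1 - x.2) = 0} * Real.log q ≤ Real.log B := by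
    intro x hx
    obtain ⟨hx₁, hx₂, hne⟩ := Finset.mem_offDiag.1 hx
    refine (sum_natCard_ringHom_mul_log_le_log_norm (sub_ne_zero.2 hne) hP).trans
      (Real.log_le_log ?_ ?_)
    · exact_mod_cast Int.natAbs_pos.2 (Algebra.norm_ne_zero_iff.2 (sub_ne_zero.2 hne))
    · exact_mod_cast hB _ hx₁ _ hx₂
  refine le_of_mul_le_mul_left ?_ (pow_pos hcard 2)
  calc (V.card : ℝ) ^ 2 *
        ∑ q ∈ P, Nat.card (R →+* ZMod q) * (1 / q - 1 / V.card) * Real.log q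
      ≤ ∑ q ∈ P, (∑ x ∈ V.offDiag, (Nat.card {φ : R →+* ZMod q // φ (x.1 - x.2) = 0} : ℝ)) *
          Real.log q := by
        rw [Finset.mul_sum]
        refine Finset.sum_le_sum fun q hq ↦ ?_
        have : Fact q.Prime := ⟨hP q hq⟩
        rw [← mul_assoc]
        exact mul_le_mul_of_nonneg_right (natCard_ringHom_mul_le_sum_offDiag V hV)
          (Real.log_natCast_nonneg q)
    _ = ∑ x ∈ V.offDiag,
          ∑ q ∈ P, Nat.card {φ : R →+* ZMod q // φ (x.1 - x.2) = 0} * Real.log q := by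
        simp only [Finset.sum_mul]
        exact Finset.sum_comm
    _ ≤ V.offDiag.card * Real.log B := by
        rw [← nsmul_eq_mul]
        exact Finset.sum_le_card_nsmul _ _ _ hpair
    _ ≤ (V.card : ℝ) ^ 2 * Real.log B := by
        refine mul_le_mul_of_nonneg_right ?_ (Real.log_natCast_nonneg B)
        rw [Finset.offDiag_card, sq]
        exact_mod_cast Nat.sub_le _ _

theorem exists_finset_norm_sub_le (R : Type*) [CommRing R] [IsDomain R] [Module.Free ℤ R]
    [Module.Finite ℤ R] :
    ∃ M : ℕ, 0 < M ∧ ∀ H : ℕ, ∃ V : Finset R, V.card = H ^ Module.finrank ℤ R ∧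
      ∀ v ∈ V, ∀ w ∈ V, (Algebra.norm ℤ (v - w)).natAbs ≤ M * H ^ Module.finrank ℤ R := by
  classical
  let b := Module.finBasis ℤ R
  let M := ClassGroup.normBound AbsoluteValue.abs b
  have hM : 0 < M := ClassGroup.normBound_pos AbsoluteValue.abs b
  refine ⟨M.natAbs, Int.natAbs_pos.2 hM.ne', fun H ↦ ?_⟩
  let e : (Fin (Module.finrank ℤ R) → Fin H) ↪ R :=
    ⟨fun c ↦ b.equivFun.symm fun i ↦ (c i : ℕ), fun c c' h ↦ by
      ext i
      exact_mod_cast congrFun (b.equivFun.symm.injective h) i⟩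
  refine ⟨Finset.univ.map e, by simp, fun v hv w hw ↦ ?_⟩
  obtain ⟨c, -, rfl⟩ := Finset.mem_map.1 hv
  obtain ⟨c', -, rfl⟩ := Finset.mem_map.1 hw
  have hrepr (c) (i) : b.repr (e c) i = (c i : ℕ) :=
    congrFun (b.equivFun.apply_symm_apply fun i ↦ ((c i : ℕ) : ℤ)) i
  have hcoord (i) : |b.repr (e c - e c') i| ≤ H := by
    rw [map_sub, Finsupp.sub_apply, hrepr, hrepr, abs_le]
    constructor <;> omega
  have hnorm := ClassGroup.norm_le AbsoluteValue.abs b (e c - e c') hcoord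
  zify
  simpa [abs_of_pos hM] using hnorm

theorem exists_le_pow_le_two_pow_mul {d N : ℕ} (hd : d ≠ 0) (hN : N ≠ 0) :
    ∃ H : ℕ, N ≤ H ^ d ∧ H ^ d ≤ 2 ^ d * N := by
  have hex : ∃ H, N ≤ H ^ d := ⟨N, Nat.le_self_pow hd N⟩
  obtain ⟨h, hh⟩ := Nat.exists_eq_succ_of_ne_zero
    (show Nat.find hex ≠ 0 by simp [Nat.find_eq_zero, hd, hN])
  have hlt : h ^ d < N := not_le.1 (Nat.find_min hex (by omega))
  refine ⟨h + 1, by simpa [hh] using Nat.find_spec hex, ?_⟩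
  rcases Nat.eq_zero_or_pos h with rfl | hpos
  · simpa using Nat.mul_le_mul (Nat.one_le_two_pow (n := d)) (Nat.one_le_iff_ne_zero.2 hN)
  · calc (h + 1) ^ d ≤ (2 * h) ^ d := Nat.pow_le_pow_left (by omega) d
      _ = 2 ^ d * h ^ d := mul_pow 2 h d
      _ ≤ 2 ^ d * N := Nat.mul_le_mul_left _ hlt.le

theorem sum_natCard_ringHom_mul_log_le (R : Type*) [CommRing R] [IsDomain R]
    [Module.Free ℤ R] [Module.Finite ℤ R] (N : ℕ) :
    ∑ q ∈ Finset.Icc 1 N with q.Prime, Nat.card (R →+* ZMod q) * Real.log q ≤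
      Module.finrank ℤ R * Real.log 4 * N := by
  calc ∑ q ∈ Finset.Icc 1 N with q.Prime, Nat.card (R →+* ZMod q) * Real.log q
      ≤ ∑ q ∈ Finset.Icc 1 N with q.Prime, Module.finrank ℤ R * Real.log q := by
        refine Finset.sum_le_sum fun q hq ↦ ?_
        have : Fact q.Prime := ⟨(Finset.mem_filter.1 hq).2⟩
        exact mul_le_mul_of_nonneg_right (Nat.cast_le.2 natCard_ringHom_zmod_le_finrank)
          (Real.log_natCast_nonneg q)
    _ = Module.finrank ℤ R * Chebyshev.theta N := by
        rw [← Finset.mul_sum, Chebyshev.theta, Nat.floor_natCast]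
        rfl
    _ ≤ Module.finrank ℤ R * Real.log 4 * N := by
        rw [mul_assoc]
        exact mul_le_mul_of_nonneg_left (Chebyshev.theta_le_log4_mul_x N.cast_nonneg)
          (Nat.cast_nonneg _)

theorem sum_natCard_ringHom_mul_log_div_le (R : Type*) [CommRing R] [IsDomain R]
    [Module.Free ℤ R] [Module.Finite ℤ R] :
    ∃ C : ℝ, ∀ N : ℕ, N ≠ 0 →
      ∑ q ∈ Finset.Icc 1 N with q.Prime, Nat.card (R →+* ZMod q) * (Real.log q / q) ≤
        Real.log N + C := by
  obtain ⟨M, hM, hbox⟩ := exists_finset_norm_sub_le R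
  set d := Module.finrank ℤ R
  refine ⟨Real.log (M * 2 ^ d) + d * Real.log 4, fun N hN ↦ ?_⟩
  obtain ⟨H, hNH, hHN⟩ := exists_le_pow_le_two_pow_mul (Module.finrank_pos (R := ℤ) (M := R)).ne' hN
  obtain ⟨V, hVcard, hV⟩ := hbox H
  have hcard_le : (N : ℝ) ≤ V.card := by exact_mod_cast hVcard ▸ hNH
  have hN0 : (0 : ℝ) < N := by positivity
  have hmain := sum_natCard_ringHom_le_log_of_norm_sub_le
    (Finset.card_pos.1 (by exact_mod_cast hN0.trans_le hcard_le)) hV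
    fun q hq ↦ (Finset.mem_filter (s := Finset.Icc 1 N).1 hq).2
  have herror : ∑ q ∈ Finset.Icc 1 N with q.Prime,
      Nat.card (R →+* ZMod q) * (Real.log q / V.card) ≤ d * Real.log 4 := by
    simp only [← mul_div_assoc, ← Finset.sum_div]
    rw [div_le_iff₀ (hN0.trans_le hcard_le)]
    exact (sum_natCard_ringHom_mul_log_le R N).trans (by gcongr)
  have hlogB : Real.log (M * H ^ d : ℕ) ≤ Real.log N + Real.log (M * 2 ^ d) := by
    have hle : ((M * H ^ d : ℕ) : ℝ) ≤ N * (M * 2 ^ d) := by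
      exact_mod_cast (Nat.mul_le_mul_left M hHN).trans_eq (by ring)
    rw [← Real.log_mul hN0.ne' (by positivity)]
    exact Real.log_le_log (by exact_mod_cast Nat.mul_pos hM (hN.bot_lt.trans_le hNH)) hle
  calc ∑ q ∈ Finset.Icc 1 N with q.Prime, Nat.card (R →+* ZMod q) * (Real.log q / q)
      = ∑ q ∈ Finset.Icc 1 N with q.Prime,
          Nat.card (R →+* ZMod q) * (1 / q - 1 / V.card) * Real.log q +
        ∑ q ∈ Finset.Icc 1 N with q.Prime, Nat.card (R →+* ZMod q) * (Real.log q / V.card) := by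
        rw [← Finset.sum_add_distrib]
        exact Finset.sum_congr rfl fun q _ ↦ by ring
    _ ≤ Real.log N + (Real.log (M * 2 ^ d) + d * Real.log 4) := by linarith

end RingHomDensity

theorem log_sub_log_mul_rpow_neg_le {x y s : ℝ} (hx : 0 < x) (hy : 0 < y) (hs : 0 < s) :
    (Real.log y - Real.log x) * y ^ (-s) ≤ (x ^ (-s) - y ^ (-s)) / s := by
  have hxy : x ^ (-s) = y ^ (-s) * Real.exp ((Real.log y - Real.log x) * s) := by
    rw [Real.rpow_def_of_pos hx, Real.rpow_def_of_pos hy, ← Real.exp_add]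
    ring_nf
  rw [le_div_iff₀ hs, hxy]
  nlinarith [mul_le_mul_of_nonneg_left (Real.add_one_le_exp ((Real.log y - Real.log x) * s))
    (Real.rpow_nonneg hy.le (-s))]

theorem sum_mul_rpow_neg_le_of_sum_le_log {f : ℕ → ℝ} {A C s : ℝ} (hA : 0 ≤ A) (hs : 0 < s)
    (hf : ∀ N : ℕ, N ≠ 0 → ∑ n ∈ Finset.Icc 1 N, f n ≤ A * Real.log N + C) {N : ℕ} (hN : N ≠ 0) :
    ∑ n ∈ Finset.Icc 1 N, f n * (n : ℝ) ^ (-s) ≤ A / s + C := by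
  -- The slack in the hypothesis at `N` is carried along, weighted by `N ^ (-s)`.
  have hinv : ∑ n ∈ Finset.Icc 1 N, f n * (n : ℝ) ^ (-s) +
      (A * Real.log N + C - ∑ n ∈ Finset.Icc 1 N, f n) * (N : ℝ) ^ (-s) ≤
      C + A * ((1 - (N : ℝ) ^ (-s)) / s) := by
    induction N, Nat.one_le_iff_ne_zero.2 hN using Nat.le_induction with
    | base => simp
    | succ N hN1 ih =>
      have hN0 : (0 : ℝ) < N := Nat.cast_pos.2 hN1
      have hslack := sub_nonneg.2 (hf N (by omega))
      have hmono : ((N + 1 : ℕ) : ℝ) ^ (-s) ≤ (N : ℝ) ^ (-s) :=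
        Real.rpow_le_rpow_of_nonpos hN0 (by simp) (by linarith)
      have hlog := mul_le_mul_of_nonneg_left
        (log_sub_log_mul_rpow_neg_le hN0 (y := (N + 1 : ℕ)) (by positivity) hs) hA
      have hsplit : (1 - ((N + 1 : ℕ) : ℝ) ^ (-s)) / s =
          (1 - (N : ℝ) ^ (-s)) / s + ((N : ℝ) ^ (-s) - ((N + 1 : ℕ) : ℝ) ^ (-s)) / s := by ring
      rw [Finset.sum_Icc_succ_top (by omega), Finset.sum_Icc_succ_top (by omega), hsplit]
      linarith [ih (by omega), mul_le_mul_of_nonneg_left hmono hslack]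
  have hlast : 0 ≤ (A * Real.log N + C - ∑ n ∈ Finset.Icc 1 N, f n) * (N : ℝ) ^ (-s) :=
    mul_nonneg (sub_nonneg.2 (hf N hN)) (by positivity)
  have hdrop : A * ((1 - (N : ℝ) ^ (-s)) / s) ≤ A / s := by
    rw [← mul_div_assoc]
    exact div_le_div_of_nonneg_right
      (mul_le_of_le_one_right hA (sub_le_self _ (by positivity))) hs.le
  linarith

section Dirichlet

open ArithmeticFunction vonMangoldt

variable {k : ℕ} {a : ZMod k} {A C : ℝ}

theorem exists_sum_residueClass_div_le
    (h : ∀ N : ℕ, N ≠ 0 → ∑ q ∈ Finset.Icc 1 N with q.Prime ∧ ((q : ℕ) : ZMod k) = a,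
      Real.log q / q ≤ A * Real.log N + C) :
    ∃ C' : ℝ, ∀ N : ℕ, N ≠ 0 →
      ∑ n ∈ Finset.Icc 1 N, residueClass a n / n ≤ A * Real.log N + C' := by
  let g (n : ℕ) : ℝ := (if n.Prime then 0 else residueClass a n) / n
  have hg (n : ℕ) : 0 ≤ g n := by
    refine div_nonneg ?_ n.cast_nonneg
    split_ifs
    exacts [le_rfl, residueClass_nonneg a n]
  refine ⟨C + ∑' n, g n, fun N hN ↦ ?_⟩
  have hsplit (n : ℕ) : residueClass a n / n =
      (if n.Prime ∧ (n : ZMod k) = a then Real.log n / n else 0) + g n := by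
    by_cases hn : n.Prime <;> by_cases ha : (n : ZMod k) = a <;>
      simp [g, residueClass, hn, ha, vonMangoldt_apply_prime]
  rw [Finset.sum_congr rfl fun n _ ↦ hsplit n, Finset.sum_add_distrib, ← Finset.sum_filter]
  linarith [h N hN, (summable_residueClass_non_primes_div a).sum_le_tsum (Finset.Icc 1 N)
    fun n _ ↦ hg n]

theorem tsum_residueClass_div_rpow_le {s : ℝ} (hA : 0 ≤ A) (hs : 0 < s)
    (h : ∀ N : ℕ, N ≠ 0 → ∑ n ∈ Finset.Icc 1 N, residueClass a n / n ≤ A * Real.log N + C) :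
    ∑' n, residueClass a n / (n : ℝ) ^ (1 + s) ≤ A / s + C := by
  refine Real.tsum_le_of_sum_le (fun n ↦ div_nonneg (residueClass_nonneg a n) (by positivity))
    fun T ↦ ?_
  have hterm (n : ℕ) : residueClass a n / (n : ℝ) ^ (1 + s) =
      residueClass a n / n * (n : ℝ) ^ (-s) := by
    rcases Nat.eq_zero_or_pos n with rfl | hn
    · simp
    · rw [Real.rpow_add (by positivity), Real.rpow_one, Real.rpow_neg n.cast_nonneg]
      field_simp
  have hsub : T ⊆ insert 0 (Finset.Icc 1 (T.sup id + 1)) := fun n hn ↦ by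
    have : n ≤ T.sup id := Finset.le_sup (f := id) hn
    simp only [Finset.mem_insert, Finset.mem_Icc]
    omega
  calc ∑ n ∈ T, residueClass a n / (n : ℝ) ^ (1 + s)
      ≤ ∑ n ∈ insert 0 (Finset.Icc 1 (T.sup id + 1)), residueClass a n / n * (n : ℝ) ^ (-s) := by
        rw [Finset.sum_congr rfl fun n _ ↦ hterm n]
        exact Finset.sum_le_sum_of_subset_of_nonneg hsub fun n _ _ ↦
          mul_nonneg (div_nonneg (residueClass_nonneg a n) n.cast_nonneg) (by positivity)
    _ = ∑ n ∈ Finset.Icc 1 (T.sup id + 1), residueClass a n / n * (n : ℝ) ^ (-s) :=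
        Finset.sum_insert_zero (by simp)
    _ ≤ A / s + C := sum_mul_rpow_neg_le_of_sum_le_log hA hs h (by omega)

theorem inv_totient_le_of_sum_log_div_le [NeZero k] (ha : IsUnit a) (hA : 0 ≤ A)
    (h : ∀ N : ℕ, N ≠ 0 → ∑ q ∈ Finset.Icc 1 N with q.Prime ∧ ((q : ℕ) : ZMod k) = a,
      Real.log q / q ≤ A * Real.log N + C) :
    (k.totient : ℝ)⁻¹ ≤ A := by
  obtain ⟨C', hC'⟩ := exists_sum_residueClass_div_le h
  obtain ⟨D, hD⟩ := LSeries_residueClass_lower_bound ha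
  have hbound : ∀ s ∈ Set.Ioc (0 : ℝ) 1, (k.totient : ℝ)⁻¹ ≤ A + (C' + D) * s := by
    rintro s ⟨hs, hs1⟩
    have hlower := hD (x := 1 + s) ⟨by linarith, by linarith⟩
    rw [add_sub_cancel_left] at hlower
    have hdiv : (k.totient : ℝ)⁻¹ / s ≤ A / s + (C' + D) := by
      linarith [tsum_residueClass_div_rpow_le hA hs hC']
    rw [div_add' _ _ _ hs.ne'] at hdiv
    exact (div_le_div_iff_of_pos_right hs).1 hdiv
  have hlim : Filter.Tendsto (fun s : ℝ ↦ A + (C' + D) * s)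
      (nhdsWithin 0 (Set.Ioi 0)) (nhds A) := by
    have : Continuous fun s : ℝ ↦ A + (C' + D) * s := by fun_prop
    simpa using (this.tendsto 0).mono_left nhdsWithin_le_nhds
  exact ge_of_tendsto hlim <| Filter.eventually_of_mem (Ioc_mem_nhdsGT one_pos) hbound

end Dirichlet

theorem exists_sum_log_div_le_of_le_natCard_ringHom (R : Type*) [CommRing R] [IsDomain R]
    [Module.Free ℤ R] [Module.Finite ℤ R] {S : ℕ → Prop} [DecidablePred S] {d B : ℕ} (hd : d ≠ 0)
    (h : ∀ q : ℕ, q.Prime → B < q → S q → d ≤ Nat.card (R →+* ZMod q)) :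
    ∃ C : ℝ, ∀ N : ℕ, N ≠ 0 → ∑ q ∈ Finset.Icc 1 N with q.Prime ∧ S q, Real.log q / q ≤
      (d : ℝ)⁻¹ * Real.log N + C := by
  obtain ⟨C, hC⟩ := sum_natCard_ringHom_mul_log_div_le R
  refine ⟨(d : ℝ)⁻¹ * C + ∑ q ∈ Finset.Icc 1 B, Real.log q / q, fun N hN ↦ ?_⟩
  have hnonneg (q : ℕ) : 0 ≤ Real.log q / q :=
    div_nonneg (Real.log_natCast_nonneg q) q.cast_nonneg
  have hpointwise (q : ℕ) (hq : q.Prime ∧ S q) : Real.log q / q ≤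
      (d : ℝ)⁻¹ * (Nat.card (R →+* ZMod q) * (Real.log q / q)) +
        if q ≤ B then Real.log q / q else 0 := by
    split_ifs with hqB
    · exact le_add_of_nonneg_left (by positivity)
    · have hcard : (d : ℝ) ≤ Nat.card (R →+* ZMod q) :=
        Nat.cast_le.2 (h q hq.1 (not_le.1 hqB) hq.2)
      rw [add_zero, ← mul_assoc, inv_mul_eq_div]
      exact le_mul_of_one_le_left (hnonneg q) ((one_le_div (by positivity)).2 hcard)
  calc ∑ q ∈ Finset.Icc 1 N with q.Prime ∧ S q, Real.log q / q
      ≤ (d : ℝ)⁻¹ * ∑ q ∈ Finset.Icc 1 N with q.Prime ∧ S q,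
          Nat.card (R →+* ZMod q) * (Real.log q / q) +
        ∑ q ∈ Finset.Icc 1 N with (q.Prime ∧ S q) ∧ q ≤ B, Real.log q / q := by
        rw [Finset.mul_sum, ← Finset.filter_filter _ (· ≤ B), Finset.sum_filter (· ≤ B),
          ← Finset.sum_add_distrib]
        exact Finset.sum_le_sum fun q hq ↦ hpointwise q (Finset.mem_filter.1 hq).2
    _ ≤ (d : ℝ)⁻¹ * ∑ q ∈ Finset.Icc 1 N with q.Prime,
          Nat.card (R →+* ZMod q) * (Real.log q / q) + ∑ q ∈ Finset.Icc 1 B, Real.log q / q := by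
        refine add_le_add (mul_le_mul_of_nonneg_left ?_ (by positivity)) ?_ <;>
          refine Finset.sum_le_sum_of_subset_of_nonneg (fun q hq ↦ ?_) fun q _ _ ↦ ?_
        · simp_all
        · exact mul_nonneg (Nat.cast_nonneg _) (hnonneg q)
        · simp_all
        · exact hnonneg q
    _ ≤ (d : ℝ)⁻¹ * Real.log N + ((d : ℝ)⁻¹ * C + ∑ q ∈ Finset.Icc 1 B, Real.log q / q) := by
        linarith [mul_le_mul_of_nonneg_left (hC N hN) (by positivity : 0 ≤ (d : ℝ)⁻¹)]

theorem le_totient_of_le_natCard_ringHom_zmod (R : Type*) [CommRing R] [IsDomain R]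
    [Module.Free ℤ R] [Module.Finite ℤ R] {k d B : ℕ} [NeZero k] {a : ZMod k} (ha : IsUnit a)
    (h : ∀ q : ℕ, q.Prime → B < q → (q : ZMod k) = a → d ≤ Nat.card (R →+* ZMod q)) :
    d ≤ k.totient := by
  rcases eq_or_ne d 0 with rfl | hd
  · exact Nat.zero_le _
  obtain ⟨C, hC⟩ := exists_sum_log_div_le_of_le_natCard_ringHom R hd h
  have hdensity := inv_totient_le_of_sum_log_div_le ha (by positivity) hC
  rw [inv_le_inv₀ (Nat.cast_pos.2 (Nat.totient_pos.2 (NeZero.pos k))) (by positivity)] at hdensity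
  exact_mod_cast hdensity

theorem irreducible_X_pow_sub_C_int {p : ℕ} (hp : p.Prime) {N : ℤ} (hN : ∀ z : ℤ, z ^ p ≠ N) :
    Irreducible (X ^ p - C N : ℤ[X]) := by
  have hmonic : (X ^ p - C N : ℤ[X]).Monic := monic_X_pow_sub_C N hp.ne_zero
  rw [hmonic.irreducible_iff_irreducible_map_fraction_map (K := ℚ), Polynomial.map_sub,
    Polynomial.map_pow, map_X, map_C]
  refine X_pow_sub_C_irreducible_of_prime hp fun b hb ↦ ?_
  have hb' : b ^ p = (N : ℚ) := hb
  obtain ⟨z, rfl⟩ := IsIntegrallyClosed.isIntegral_iff.1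
    (show IsIntegral ℤ b from ⟨X ^ p - C N, hmonic, by rw [← aeval_def]; simp [hb']⟩)
  exact hN z (by exact_mod_cast (show (z : ℚ) ^ p = N by simpa using hb'))

theorem le_natCard_pow_eq {p q : ℕ} [Fact p.Prime] [Fact q.Prime] (hq : (q : ZMod p) = 1)
    {z : ZMod q} (hz : z ≠ 0) : p ≤ Nat.card {x : ZMod q // x ^ p = z ^ p} := by
  have hp := (Fact.out : p.Prime)
  have hdvd : p ∣ Fintype.card (ZMod q)ˣ := by
    rw [ZMod.card_units, ← ZMod.natCast_eq_zero_iff,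
      Nat.cast_sub (Fact.out : q.Prime).one_le, hq, Nat.cast_one, sub_self]
  obtain ⟨g, hg⟩ := exists_prime_orderOf_dvd_card p hdvd
  have hprim : IsPrimitiveRoot (g : ZMod q) p :=
    IsPrimitiveRoot.coe_units_iff.2 (hg ▸ IsPrimitiveRoot.orderOf g)
  have hcard : (nthRoots p (z ^ p)).toFinset.card = p := by
    rw [Multiset.toFinset_card_of_nodup (hprim.nthRoots_nodup (pow_ne_zero p hz)),
      hprim.card_nthRoots, if_pos ⟨z, rfl⟩]
  rw [Nat.card_eq_fintype_card, Fintype.card_subtype]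
  refine hcard.ge.trans (Finset.card_le_card fun x hx ↦ ?_)
  simpa [mem_nthRoots hp.pos] using hx

theorem exists_prime_forall_pow_ne {p : ℕ} (hp : p.Prime) {N : ℤ} (hN : ∀ z : ℤ, z ^ p ≠ N)
    (B : ℕ) : ∃ q : ℕ, q.Prime ∧ B < q ∧ ∀ z : ZMod q, z ^ p ≠ N := by
  by_contra! hlocal
  have : Fact p.Prime := ⟨hp⟩
  have hN0 : N ≠ 0 := fun h ↦ hN 0 (by rw [h, zero_pow hp.ne_zero])
  have hmonic : (X ^ p - C N : ℤ[X]).Monic := monic_X_pow_sub_C N hp.ne_zero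
  let R := AdjoinRoot (X ^ p - C N : ℤ[X])
  have : IsDomain R := AdjoinRoot.isDomain_of_prime (irreducible_X_pow_sub_C_int hp hN).prime
  have : Module.Finite ℤ R := hmonic.finite_adjoinRoot
  have : Module.Free ℤ R := hmonic.free_adjoinRoot
  have hhoms (q : ℕ) (hq : q.Prime) (hlt : max B N.natAbs < q) (hq1 : (q : ZMod p) = 1) :
      p ≤ Nat.card (R →+* ZMod q) := by
    have : Fact q.Prime := ⟨hq⟩
    have := finite_ringHom_zmod (R := R) (q := q)
    obtain ⟨z, hz⟩ := hlocal q hq ((le_max_left _ _).trans_lt hlt)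
    have hz0 : z ≠ 0 := by
      rintro rfl
      rw [zero_pow hp.ne_zero, eq_comm, ZMod.intCast_zmod_eq_zero_iff_dvd] at hz
      have := Nat.le_of_dvd (Int.natAbs_pos.2 hN0) (Int.natCast_dvd.1 hz)
      omega
    let lift (x : {x : ZMod q // x ^ p = z ^ p}) : R →+* ZMod q :=
      AdjoinRoot.lift (Int.castRingHom (ZMod q)) x.1 (by
        rw [eval₂_sub, eval₂_X_pow, eval₂_C, x.2, hz]
        simp)
    refine (le_natCard_pow_eq hq1 hz0).trans (Nat.card_le_card_of_injective lift fun x y h ↦ ?_)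
    have hroot := congrArg (fun f : R →+* ZMod q ↦ f (AdjoinRoot.root _)) h
    exact Subtype.ext (((AdjoinRoot.lift_root _).symm.trans hroot).trans (AdjoinRoot.lift_root _))
  have hle := le_totient_of_le_natCard_ringHom_zmod R isUnit_one hhoms
  exact (Nat.totient_lt p hp.one_lt).not_ge hle

section DetectsPowers

variable {ι : Type*} [Fintype ι] {r : ι → ℕ}

theorem dvd_of_pow_eq_neg_one_pow_mul_prod_pow (hr : ∀ i, (r i).Prime)
    (hinj : Function.Injective r) {p s : ℕ} {e : ι → ℕ} {z : ℤ}
    (hz : z ^ p = (-1) ^ s * ∏ i, (r i : ℤ) ^ e i) (i : ι) : p ∣ e i := by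
  have habs : z.natAbs ^ p = ∏ j, r j ^ e j := by
    have h := congrArg Int.natAbs hz
    have hcast : ∏ j, (r j : ℤ) ^ e j = (∏ j, r j ^ e j : ℕ) := by push_cast; rfl
    rwa [hcast, Int.natAbs_mul, Int.natAbs_pow, Int.natAbs_pow, Int.natAbs_neg, Int.natAbs_one,
      one_pow, one_mul, Int.natAbs_natCast] at h
  have hval := congrArg (fun m : ℕ ↦ m.factorization (r i)) habs
  have hsum : (∏ j, r j ^ e j).factorization (r i) = e i := by
    rw [Nat.factorization_prod_apply fun j _ ↦ pow_ne_zero _ (hr j).ne_zero,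
      Finset.sum_eq_single_of_mem i (Finset.mem_univ i)]
    · rw [(hr i).factorization_pow, Finsupp.single_eq_same]
    · intro j _ hj
      rw [(hr j).factorization_pow, Finsupp.single_eq_of_ne (hinj.ne hj).symm]
  rw [hsum, Nat.factorization_pow, Finsupp.smul_apply, smul_eq_mul] at hval
  exact Dvd.intro _ hval

theorem exists_prime_forall_dvd_of_pow_eq (hr : ∀ i, (r i).Prime) (hinj : Function.Injective r)
    {p : ℕ} (hp : p.Prime) (B s : ℕ) (e : ι → ℕ) :
    ∃ q : ℕ, q.Prime ∧ B < q ∧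
      ∀ z : ZMod q, z ^ p = (-1) ^ s * ∏ i, (r i : ZMod q) ^ e i → ∀ i, p ∣ e i := by
  by_cases h : ∃ z : ℤ, z ^ p = (-1) ^ s * ∏ i, (r i : ℤ) ^ e i
  · obtain ⟨z, hz⟩ := h
    obtain ⟨q, hlt, hq⟩ := Nat.exists_infinite_primes (B + 1)
    exact ⟨q, hq, hlt, fun _ _ ↦ dvd_of_pow_eq_neg_one_pow_mul_prod_pow hr hinj hz⟩
  · push Not at h
    obtain ⟨q, hq, hlt, hpow⟩ := exists_prime_forall_pow_ne hp h B
    exact ⟨q, hq, hlt, fun z hz ↦ (hpow z (by push_cast; exact hz)).elim⟩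

/-- The moduli `q ∈ Q` detect `p`-th powers among the rationals `± ∏ i, r i ^ e i`: one which is
a `p`-th power modulo every `q ∈ Q` has all its exponents divisible by `p`. Only prime moduli are
tested, so that negative exponents make sense. -/
def DetectsPowers (Q : Finset ℕ) (r : ι → ℕ) (p : ℕ) : Prop :=
  ∀ (s : ℕ) (e : ι → ℤ),
    (∀ q ∈ Q, ∀ _ : Fact q.Prime, ∃ z : ZMod q, z ^ p = (-1) ^ s * ∏ i, (r i : ZMod q) ^ e i) →
      ∀ i, (p : ℤ) ∣ e i

theorem DetectsPowers.mono {Q Q' : Finset ℕ} {p : ℕ} (h : DetectsPowers Q r p) (hQ : Q ⊆ Q') :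
    DetectsPowers Q' r p :=
  fun s e he ↦ h s e fun q hq ↦ he q (hQ hq)

theorem exists_detectsPowers (hr : ∀ i, (r i).Prime) (hinj : Function.Injective r) {p : ℕ}
    (hp : p.Prime) (B : ℕ) :
    ∃ Q : Finset ℕ, (∀ q ∈ Q, q.Prime ∧ B < q) ∧ DetectsPowers Q r p := by
  classical
  obtain ⟨B', hB'⟩ : ∃ B', ∀ i, r i ≤ B' := (Set.finite_range r).bddAbove.imp fun _ h i ↦ h ⟨i, rfl⟩
  choose q hq hlt hpow using fun t : Fin 2 × (ι → Fin p) ↦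
    exists_prime_forall_dvd_of_pow_eq hr hinj hp (max B B') t.1 fun i ↦ t.2 i
  refine ⟨Finset.univ.image q, ?_, fun s e he i ↦ ?_⟩
  · simp only [Finset.mem_image, Finset.mem_univ, true_and, forall_exists_index]
    rintro _ t rfl
    exact ⟨hq t, (le_max_left _ _).trans_lt (hlt t)⟩
  have hp0 : (p : ℤ) ≠ 0 := mod_cast hp.ne_zero
  have hmod (j : ι) : ((e j % p).toNat : ℤ) = e j % p :=
    Int.toNat_of_nonneg (Int.emod_nonneg _ hp0)
  let t : Fin 2 × (ι → Fin p) := (Fin.ofNat 2 s, fun j ↦ ⟨(e j % p).toNat, by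
    have := Int.emod_lt_of_pos (e j) (mod_cast hp.pos : (0 : ℤ) < p)
    have := hmod j
    omega⟩)
  have : Fact (q t).Prime := ⟨hq t⟩
  have hr0 (j : ι) : (r j : ZMod (q t)) ≠ 0 := by
    rw [Ne, ZMod.natCast_eq_zero_iff]
    exact Nat.not_dvd_of_pos_of_lt (hr j).pos
      ((hB' j).trans_lt ((le_max_right _ _).trans_lt (hlt t)))
  obtain ⟨z, hz⟩ := he (q t) (Finset.mem_image_of_mem _ (Finset.mem_univ t)) this
  have hdvd := hpow t (z * ∏ j, (r j : ZMod (q t)) ^ (-(e j / p))) (by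
    rw [mul_pow, hz, ← Finset.prod_pow, mul_assoc, ← Finset.prod_mul_distrib,
      neg_one_pow_eq_pow_mod_two]
    congr 1
    refine Finset.prod_congr rfl fun j _ ↦ ?_
    rw [← zpow_natCast, ← zpow_natCast, ← zpow_mul, ← zpow_add₀ (hr0 j), hmod j, Int.emod_def]
    ring_nf) i
  rw [← Int.natCast_dvd_natCast, hmod i] at hdvd
  exact (dvd_iff_dvd_of_dvd_sub Int.dvd_emod_sub_self).1 hdvd

theorem exists_detectsPowers_of_dvd (hr : ∀ i, (r i).Prime) (hinj : Function.Injective r) {n : ℕ}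
    (hn : n ≠ 0) (B : ℕ) : ∃ Q : Finset ℕ, (∀ q ∈ Q, q.Prime ∧ B < q) ∧
      ∀ p : ℕ, p.Prime → p ∣ n → DetectsPowers Q r p := by
  classical
  choose Q hQ hdet using fun p : n.primeFactors ↦
    exists_detectsPowers hr hinj (Nat.prime_of_mem_primeFactors p.2) B
  refine ⟨n.primeFactors.attach.biUnion Q, fun q hq ↦ ?_, fun p hp hpn ↦ ?_⟩
  · obtain ⟨p, -, hqp⟩ := Finset.mem_biUnion.1 hq
    exact hQ p q hqp
  · exact (hdet ⟨p, Nat.mem_primeFactors.2 ⟨hp, hpn, hn⟩⟩).mono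
      (Finset.subset_biUnion_of_mem Q (Finset.mem_attach _ _))

end DetectsPowers

section ZModRank

theorem injective_of_forall_pow_prime_eq_one {A G : Type*} [Group A] [Group G] {n : ℕ}
    (hn : n ≠ 0) (hA : ∀ a : A, a ^ n = 1) (φ : A →* G)
    (hφ : ∀ p : ℕ, p.Prime → p ∣ n → ∀ a, a ^ p = 1 → φ a = 1 → a = 1) :
    Function.Injective φ := by
  refine (injective_iff_map_eq_one φ).2 fun a ha ↦ ?_
  by_contra ha1
  have hdvd : orderOf a ∣ n := orderOf_dvd_of_pow_eq_one (hA a)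
  have hord : orderOf a ≠ 0 := ne_zero_of_dvd_ne_zero hn hdvd
  obtain ⟨p, hp, hpa⟩ := Nat.exists_prime_and_dvd (mt orderOf_eq_one_iff.1 ha1)
  have hpow := orderOf_pow_orderOf_div hord hpa
  have hone := hφ p hp (hpa.trans hdvd) (a ^ (orderOf a / p))
    (orderOf_dvd_iff_pow_eq_one.1 hpow.dvd) (by rw [map_pow, ha, one_pow])
  rw [hone, orderOf_one] at hpow
  exact hp.one_lt.ne hpow

theorem exists_zmod_val_eq_div_mul {n p : ℕ} [NeZero n] (hpn : p ∣ n) {a : ZMod n}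
    (ha : p • a = 0) : ∃ f < p, a.val = n / p * f := by
  obtain ⟨k, rfl⟩ := hpn
  have hpk : p * k ≠ 0 := NeZero.ne _
  rw [Nat.mul_div_cancel_left k (Nat.pos_of_ne_zero (left_ne_zero_of_mul hpk))]
  rw [← ZMod.natCast_zmod_val a, nsmul_eq_mul, ← Nat.cast_mul, ZMod.natCast_eq_zero_iff] at ha
  obtain ⟨f, hf⟩ := Nat.dvd_of_mul_dvd_mul_left
    (Nat.pos_of_ne_zero (left_ne_zero_of_mul hpk)) ha
  refine ⟨f, lt_of_mul_lt_mul_left ?_ k.zero_le, hf⟩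
  rw [← hf, mul_comm k]
  exact ZMod.val_lt a

theorem hasZModRankGE_of_pow_eq_one {M : Type*} [CommGroup M] {n s : ℕ} (hn : n ≠ 0)
    {c : Fin s → M} (hc : ∀ i, c i ^ n = 1)
    (hind : ∀ p : ℕ, p.Prime → p ∣ n → ∀ f : Fin s → ℕ, (∀ i, f i < p) →
      ∏ i, c i ^ (n / p * f i) = 1 → ∀ i, f i = 0) : HasZModRankGE M n s := by
  have : NeZero n := ⟨hn⟩
  let φ : Multiplicative (Fin s → ZMod n) →* M := MonoidHom.mk'
    (fun v ↦ ∏ i, c i ^ (v.toAdd i).val) fun v w ↦ by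
      rw [← Finset.prod_mul_distrib]
      refine Finset.prod_congr rfl fun i _ ↦ ?_
      rw [toAdd_mul, Pi.add_apply, ZMod.val_add, ← pow_eq_pow_mod _ (hc i), pow_add]
  refine ⟨φ, injective_of_forall_pow_prime_eq_one hn (fun v ↦ ?_) φ
    fun p hp hpn v hv hker ↦ ?_⟩
  · exact Multiplicative.toAdd.injective (funext fun i ↦ by simp)
  · choose f hfp hf using fun i ↦
      exists_zmod_val_eq_div_mul hpn (congrFun (congrArg Multiplicative.toAdd hv) i)
    have hf0 := hind p hp hpn f hfp (by simp only [← hf]; exact hker)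
    refine Multiplicative.toAdd.injective (funext fun i ↦ (ZMod.val_eq_zero _).1 ?_)
    rw [hf i, hf0 i, mul_zero]

open scoped nonZeroDivisors in
theorem hasZModRankGE_classGroup {R : Type*} [CommRing R] [IsDedekindDomain R] {n s : ℕ}
    (hn : n ≠ 0) {a : Fin s → R} (ha : ∀ i, a i ≠ 0)
    (hI : ∀ i, ∃ I : Ideal R, Ideal.span {a i} = I ^ n)
    (hind : ∀ p : ℕ, p.Prime → p ∣ n → ∀ f : Fin s → ℕ, (∀ i, f i < p) →
      ∀ (w : Rˣ) (γ : R), w * ∏ i, a i ^ f i = γ ^ p → ∀ i, f i = 0) :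
    HasZModRankGE (ClassGroup R) n s := by
  choose I hI using hI
  have hI0 (i : Fin s) : I i ≠ 0 := fun h ↦ ha i <| by
    rw [← Ideal.span_singleton_eq_bot, hI i, h, zero_pow hn, Ideal.zero_eq_bot]
  let J (i : Fin s) : (Ideal R)⁰ := ⟨I i, mem_nonZeroDivisors_of_ne_zero (hI0 i)⟩
  refine hasZModRankGE_of_pow_eq_one hn (c := fun i ↦ ClassGroup.mk0 (J i)) (fun i ↦ ?_)
    fun p hp hpn f hfp hprod ↦ ?_
  · rw [← map_pow]
    exact (ClassGroup.mk0_eq_one_iff (J i ^ n).2).2 ⟨⟨a i, (hI i).symm⟩⟩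
  obtain ⟨⟨γ, hγ⟩⟩ : (∏ i, I i ^ (n / p * f i)).IsPrincipal := by
    have hmk : ClassGroup.mk0 (∏ i, J i ^ (n / p * f i)) = 1 := by
      simpa only [map_prod, map_pow] using hprod
    simpa only [Submonoid.coe_finsetProd, SubmonoidClass.coe_pow, J] using
      (ClassGroup.mk0_eq_one_iff (∏ i, J i ^ (n / p * f i)).2).1 hmk
  have hspan : Ideal.span {∏ i, a i ^ f i} = Ideal.span {γ ^ p} := calc
    Ideal.span {∏ i, a i ^ f i} = ∏ i, (I i ^ n) ^ f i := by
      simp only [← Ideal.prod_span_singleton, ← Ideal.span_singleton_pow, hI]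
    _ = (∏ i, I i ^ (n / p * f i)) ^ p := by
      rw [← Finset.prod_pow]
      refine Finset.prod_congr rfl fun i _ ↦ ?_
      rw [← pow_mul, ← pow_mul, mul_right_comm, Nat.div_mul_cancel hpn]
    _ = Ideal.span {γ ^ p} := by rw [hγ, ← Ideal.span_singleton_pow]
  obtain ⟨w, hw⟩ := Ideal.span_singleton_eq_span_singleton.1 hspan
  exact hind p hp hpn f hfp w γ (by rw [mul_comm, hw])

theorem exists_eq_sum_nsmul_add_nsmul {V ι : Type*} [AddCommGroup V] [Module.Free ℤ V]
    [Module.Finite ℤ V] [Fintype ι] (hι : Fintype.card ι = Module.finrank ℤ V) {p : ℕ}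
    (hp : p.Prime) {w : ι → V}
    (hw : ∀ (e : ι → ℕ) (v : V), ∑ i, e i • w i = p • v → ∀ i, p ∣ e i) (z : V) :
    ∃ (e : ι → ℕ) (v : V), z = ∑ i, e i • w i + p • v := by
  have : Fact p.Prime := ⟨hp⟩
  let b := Module.Free.chooseBasis ℤ V
  let red : V →+ (Module.Free.ChooseBasisIndex ℤ V → ZMod p) :=
    { toFun v j := (b.repr v j : ZMod p)
      map_zero' := by ext; simp
      map_add' _ _ := by ext; simp }
  have hred (v : V) (hv : red v = 0) : ∃ v', v = p • v' := by
    choose k hk using fun j ↦ (ZMod.intCast_zmod_eq_zero_iff_dvd _ p).1 (congrFun hv j)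
    refine ⟨b.equivFun.symm k, b.equivFun.injective (funext fun j ↦ ?_)⟩
    rw [map_nsmul, LinearEquiv.apply_symm_apply, Pi.smul_apply, nsmul_eq_mul, ← hk j,
      Module.Basis.equivFun_apply]
  have hsum (c : ι → ZMod p) : red (∑ i, (c i).val • w i) = ∑ i, c i • red (w i) := by
    rw [map_sum]
    refine Finset.sum_congr rfl fun i _ ↦ ?_
    rw [map_nsmul, ← Nat.cast_smul_eq_nsmul (ZMod p), ZMod.natCast_zmod_val]
  have hli : LinearIndependent (ZMod p) fun i ↦ red (w i) := by
    refine Fintype.linearIndependent_iff.2 fun c hc i ↦ ?_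
    obtain ⟨v, hv⟩ := hred _ ((hsum c).trans hc)
    exact (ZMod.val_eq_zero _).1 (Nat.eq_zero_of_dvd_of_lt (hw _ v hv i) (ZMod.val_lt _))
  obtain ⟨c, hc⟩ := (Submodule.mem_span_range_iff_exists_fun (ZMod p)).1
    ((hli.span_eq_top_of_card_eq_finrank' (by
      rw [hι, Module.finrank_fintype_fun_eq_card, Module.finrank_eq_card_chooseBasisIndex])).ge
      (Submodule.mem_top (x := red z)))
  obtain ⟨v, hv⟩ := hred (z - ∑ i, (c i).val • w i) (by rw [map_sub, hsum, hc, sub_self])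
  exact ⟨fun i ↦ (c i).val, v, by rw [← hv, add_sub_cancel]⟩

end ZModRank

section NumberFieldUnits

variable {K : Type*} [Field K] [NumberField K] {ι : Type*} [Fintype ι]

theorem exists_torsion_mul_prod_pow_mul_pow_eq (hι : Fintype.card ι = Units.rank K) {p : ℕ}
    (hp : p.Prime) {w : ι → (𝓞 K)ˣ}
    (hw : ∀ ζ ∈ Units.torsion K, ∀ (e : ι → ℕ) (v : (𝓞 K)ˣ),
      ζ * ∏ i, w i ^ e i = v ^ p → ∀ i, p ∣ e i) (z : (𝓞 K)ˣ) :
    ∃ ζ ∈ Units.torsion K, ∃ (e : ι → ℕ) (v : (𝓞 K)ˣ), ζ * (∏ i, w i ^ e i) * v ^ p = z := by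
  let π : (𝓞 K)ˣ →* (𝓞 K)ˣ ⧸ Units.torsion K := QuotientGroup.mk' _
  have hπ {x x' : (𝓞 K)ˣ} (h : π x = π x') : ∃ ζ ∈ Units.torsion K, ζ * x = x' :=
    ⟨x⁻¹ * x', QuotientGroup.eq.1 h, by rw [mul_comm, mul_inv_cancel_left]⟩
  have hsum (e : ι → ℕ) : ∑ i, e i • Additive.ofMul (π (w i)) =
      Additive.ofMul (π (∏ i, w i ^ e i)) := by
    simp only [map_prod, map_pow, ofMul_prod, ofMul_pow]
  obtain ⟨e, v, hz⟩ := exists_eq_sum_nsmul_add_nsmul (w := fun i ↦ Additive.ofMul (π (w i)))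
    (hι.trans (Units.finrank_modTorsion K).symm) hp (fun e v hv ↦ by
      obtain ⟨v, rfl⟩ := QuotientGroup.mk'_surjective (Units.torsion K) v.toMul
      obtain ⟨ζ, hζ, h⟩ := hπ (x := ∏ i, w i ^ e i) (x' := v ^ p) ((hsum e).symm.trans hv)
      exact hw ζ hζ e v h) (Additive.ofMul (π z))
  obtain ⟨v, rfl⟩ := Additive.ofMul.surjective v
  obtain ⟨v, rfl⟩ := QuotientGroup.mk'_surjective (Units.torsion K) v
  obtain ⟨ζ, hζ, h⟩ := hπ (x := (∏ i, w i ^ e i) * v ^ p) (x' := z) (by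
    rw [map_mul, map_pow]
    exact (hsum e ▸ hz).symm)
  exact ⟨ζ, hζ, e, v, by rw [mul_assoc, h]⟩

theorem torsion_eq_one_or_neg_one (φ : K →+* ℝ) {ζ : (𝓞 K)ˣ} (hζ : ζ ∈ Units.torsion K) :
    ζ = 1 ∨ ζ = -1 := by
  have hfin : IsOfFinOrder (φ ζ) :=
    (((φ : K →* ℝ).comp (algebraMap (𝓞 K) K)).comp (Units.coeHom (𝓞 K))).isOfFinOrder
      ((CommGroup.mem_torsion ζ).1 hζ)
  have hinj {u : (𝓞 K)ˣ} (h : φ ζ = φ u) : ζ = u :=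
    Units.ext (RingOfIntegers.coe_injective (φ.injective h))
  rcases (abs_eq zero_le_one).1 hfin.norm_eq_one with h | h
  · exact Or.inl (hinj (by simpa using h))
  · exact Or.inr (hinj (by simpa using h))

theorem hasZModRankGE_classGroup_ringOfIntegers (hι : Fintype.card ι = Units.rank K) {n s : ℕ}
    (hn : n ≠ 0) {w : ι → (𝓞 K)ˣ} {a : Fin s → 𝓞 K} (ha : ∀ i, a i ≠ 0)
    (hI : ∀ i, ∃ I : Ideal (𝓞 K), Ideal.span {a i} = I ^ n)
    (hind : ∀ p : ℕ, p.Prime → p ∣ n → ∀ ζ ∈ Units.torsion K, ∀ (e : ι → ℕ) (f : Fin s → ℕ),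
      (∀ i, f i < p) → ∀ γ : 𝓞 K, (ζ : 𝓞 K) * (∏ i, (w i : 𝓞 K) ^ e i) * ∏ i, a i ^ f i = γ ^ p →
        (∀ i, p ∣ e i) ∧ ∀ i, f i = 0) :
    HasZModRankGE (ClassGroup (𝓞 K)) n s := by
  refine hasZModRankGE_classGroup hn ha hI fun p hp hpn f hf z γ hγ ↦ ?_
  obtain ⟨ζ, hζ, e, v, rfl⟩ := exists_torsion_mul_prod_pow_mul_pow_eq hι hp (w := w)
    (fun ζ hζ e v h ↦ (hind p hp hpn ζ hζ e 0 (fun _ ↦ hp.pos) v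
      (by simpa using congrArg Units.val h)).1) z
  refine (hind p hp hpn ζ hζ e f hf (γ * (v⁻¹ : (𝓞 K)ˣ)) ?_).2
  have hv : (v : 𝓞 K) ^ p * ((v⁻¹ : (𝓞 K)ˣ) : 𝓞 K) ^ p = 1 := by
    rw [← mul_pow, Units.mul_inv, one_pow]
  rw [mul_pow, ← hγ]
  push_cast
  rw [mul_right_comm _ (_ ^ p), mul_assoc _ (_ ^ p), hv, mul_one]

end NumberFieldUnits

section SimpleRoots

variable {q : ℕ} [Fact q.Prime]

theorem exists_padicInt_root_of_simple_root {f : ℤ[X]} (hf : f.Monic) {c : ZMod q}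
    (hc : aeval c f = 0) (hc' : aeval c (derivative f) ≠ 0) :
    ∃ z : ℤ_[q], aeval z f = 0 ∧ PadicInt.toZMod z = c := by
  obtain ⟨a, rfl⟩ := ZMod.ringHom_surjective (PadicInt.toZMod (p := q)) c
  have toZMod_eval (g : ℤ[X]) : PadicInt.toZMod ((g.map (algebraMap ℤ ℤ_[q])).eval a) =
      aeval (PadicInt.toZMod a) g := by
    rw [eval_map_algebraMap]
    exact (aeval_algHom_apply (PadicInt.toZMod (p := q)).toIntAlgHom a g).symm
  have mem_maximalIdeal_iff (z : ℤ_[q]) :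
      z ∈ IsLocalRing.maximalIdeal ℤ_[q] ↔ PadicInt.toZMod z = 0 := by
    rw [← PadicInt.ker_toZMod, RingHom.mem_ker]
  obtain ⟨z, hz, hza⟩ := HenselianRing.is_henselian (I := IsLocalRing.maximalIdeal ℤ_[q])
    (f.map (algebraMap ℤ ℤ_[q])) (hf.map _) a
    (by rw [mem_maximalIdeal_iff, toZMod_eval, hc])
    (IsUnit.map _ (by
      rwa [← IsLocalRing.notMem_maximalIdeal, mem_maximalIdeal_iff, derivative_map, toZMod_eval]))
  rw [mem_maximalIdeal_iff, map_sub, sub_eq_zero] at hza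
  exact ⟨z, by rwa [IsRoot, eval_map_algebraMap] at hz, hza⟩

theorem exists_ringHom_padicInt_eq_of_root {K : Type*} [Field K] [NumberField K] {θ : 𝓞 K}
    (hθ : Algebra.adjoin ℚ {(θ : K)} = ⊤) {z : ℤ_[q]} (hz : aeval z (minpoly ℤ θ) = 0) :
    ∃ ψ : 𝓞 K →+* ℤ_[q], ψ θ = z := by
  let pb := PowerBasis.ofAdjoinEqTop (Algebra.IsIntegral.isIntegral (R := ℚ) (θ : K)) hθ
  have hgen : pb.gen = θ := PowerBasis.ofAdjoinEqTop_gen _ hθ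
  have hroot : aeval (z : ℚ_[q]) (minpoly ℚ pb.gen) = 0 := by
    rw [hgen, minpoly.isIntegrallyClosed_eq_field_fractions ℚ K (RingOfIntegers.isIntegral θ),
      aeval_map_algebraMap]
    exact (aeval_algebraMap_apply ℚ_[q] z _).trans (by rw [hz, map_zero])
  let g : 𝓞 K →+* ℚ_[q] := (pb.lift (z : ℚ_[q]) hroot : K →+* ℚ_[q]).comp (algebraMap (𝓞 K) K)
  have hg : ∀ w, g w ∈ PadicInt.subring q := fun w ↦ by
    obtain ⟨v, hv⟩ := IsIntegrallyClosed.isIntegral_iff.1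
      (((RingOfIntegers.isIntegral w).map g.toIntAlgHom).tower_top (A := ℤ_[q]))
    exact (hv : (v : ℚ_[q]) = g w) ▸ v.2
  refine ⟨g.codRestrict _ hg, Subtype.ext ?_⟩
  exact (congrArg (pb.lift (z : ℚ_[q]) hroot) hgen.symm).trans (pb.lift_gen _ hroot)

theorem exists_ringHom_zmod_eq_of_simple_root {K : Type*} [Field K] [NumberField K] {θ : 𝓞 K}
    (hθ : Algebra.adjoin ℚ {(θ : K)} = ⊤) {c : ZMod q} (hc : aeval c (minpoly ℤ θ) = 0)
    (hc' : aeval c (derivative (minpoly ℤ θ)) ≠ 0) : ∃ ψ : 𝓞 K →+* ZMod q, ψ θ = c := by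
  obtain ⟨z, hz, rfl⟩ :=
    exists_padicInt_root_of_simple_root (minpoly.monic (RingOfIntegers.isIntegral θ)) hc hc'
  obtain ⟨ψ, rfl⟩ := exists_ringHom_padicInt_eq_of_root hθ hz
  exact ⟨PadicInt.toZMod.comp ψ, rfl⟩

end SimpleRoots

section Quartic

/-- The quartic `x⁴ + 2mx³ + 2x² - 2mx + 1`. The polynomial of the theorem is its image in `ℚ[X]`
for `12m + 25 = yⁿ`, a normalization chosen because `12m + 25` is its value at `2`. -/
noncomputable def quartic (m : ℤ) : ℤ[X] :=
  X ^ 4 + C (2 * m) * X ^ 3 + C 2 * X ^ 2 - C (2 * m) * X + 1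

variable {m : ℤ}

theorem natDegree_quartic : (quartic m).natDegree = 4 := by
  unfold quartic; compute_degree!

theorem monic_quartic : (quartic m).Monic := by
  unfold quartic; monicity!

theorem aeval_quartic {R : Type*} [CommRing R] (x : R) :
    aeval x (quartic m) = x ^ 4 + 2 * m * x ^ 3 + 2 * x ^ 2 - 2 * m * x + 1 := by
  simp [quartic, map_ofNat]

theorem eval_quartic_ne_zero (k : ℤ) : (quartic m).eval k ≠ 0 := by
  intro hk
  rw [← coe_aeval_eq_eval, aeval_quartic, Int.cast_id] at hk
  have hunit : IsUnit k :=
    IsUnit.of_mul_eq_one (-(k ^ 3 + 2 * m * k ^ 2 + 2 * k - 2 * m)) (by linear_combination -hk)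
  rcases Int.isUnit_iff.1 hunit with rfl | rfl <;> ring_nf at hk <;> omega

theorem quartic_ne_quadratic_mul_quadratic (hm : 2 < m) (b c d e : ℤ) :
    quartic m ≠ (X ^ 2 + C b * X + C c) * (X ^ 2 + C d * X + C e) := by
  intro h
  have eval_eq (k : ℤ) : k ^ 4 + 2 * m * k ^ 3 + 2 * k ^ 2 - 2 * m * k + 1 =
      (k ^ 2 + b * k + c) * (k ^ 2 + d * k + e) := by
    simpa [quartic] using congrArg (eval k) h
  have h₀ := eval_eq 0
  have h₁ := eval_eq 1
  have h₂ := eval_eq (-1)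
  have h₃ := eval_eq 2
  have hce : c * e = 1 := by linarith
  have hbd : b + d = 2 * m := by linarith
  have hbe : b * e + d * c = -(2 * m) := by linarith
  rcases Int.eq_one_or_neg_one_of_mul_eq_one' hce with ⟨rfl, rfl⟩ | ⟨rfl, rfl⟩
  · omega
  · have hbd4 : b * d = 4 := by linarith
    have hb : b ≤ 4 := Int.le_of_dvd (by norm_num) ⟨d, hbd4.symm⟩
    have hd : d ≤ 4 := Int.le_of_dvd (by norm_num) ⟨b, by linarith⟩
    obtain rfl | rfl | rfl : b = 2 ∨ b = 3 ∨ b = 4 := by omega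
    all_goals omega

theorem irreducible_quartic (hm : 2 < m) : Irreducible (quartic m) := by
  refine monic_quartic.irreducible_iff_natDegree'.2
    ⟨fun h ↦ by simpa [h] using natDegree_quartic (m := m), fun f g hf hg hfg hmem ↦ ?_⟩
  have hdeg : f.natDegree + g.natDegree = 4 := by
    rw [← hf.natDegree_mul hg, hfg, natDegree_quartic]
  obtain hg1 | hg2 : g.natDegree = 1 ∨ g.natDegree = 2 := by
    rw [natDegree_quartic, Finset.mem_Ioc] at hmem
    omega
  · apply eval_quartic_ne_zero (-g.coeff 0)
    rw [← hfg, eval_mul, hg.eq_X_add_C hg1]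
    simp
  · have monic_quadratic {p : ℤ[X]} (hp : p.Monic) (hp2 : p.natDegree = 2) :
        p = X ^ 2 + C (p.coeff 1) * X + C (p.coeff 0) := by
      conv_lhs => rw [hp.as_sum, hp2]
      simp only [Finset.sum_range_succ, Finset.sum_range_zero, pow_zero, pow_one]
      ring
    apply quartic_ne_quadratic_mul_quadratic hm (f.coeff 1) (f.coeff 0) (g.coeff 1) (g.coeff 0)
    rw [← monic_quadratic hf (by omega), ← monic_quadratic hg hg2, hfg]

theorem irreducible_map_quartic (hm : 2 < m) : Irreducible ((quartic m).map (algebraMap ℤ ℚ)) :=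
  monic_quartic.irreducible_iff_irreducible_map_fraction_map.1 (irreducible_quartic hm)

theorem minpoly_eq_map_quartic {K : Type*} [Field K] [CharZero K] (hm : 2 < m) {x : K}
    (hx : aeval x (quartic m) = 0) : minpoly ℚ x = (quartic m).map (algebraMap ℤ ℚ) :=
  (minpoly.eq_of_irreducible_of_monic (irreducible_map_quartic hm)
    (by rwa [aeval_map_algebraMap]) (monic_quartic.map _)).symm

end Quartic

theorem star_eq_of_sq_eq_ofReal {z : ℂ} {r : ℝ} (hr : 0 ≤ r) (h : z ^ 2 = r) : star z = z := by
  obtain rfl | rfl : z = √r ∨ z = -√r := by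
    rw [← sq_eq_sq_iff_eq_or_eq_neg, h]
    exact mod_cast (Real.sq_sqrt hr).symm
  all_goals simp

theorem exists_span_singleton_eq_pow_of_isCoprime {R : Type*} [CommRing R] [IsDedekindDomain R]
    {a b c : R} {n : ℕ} (hab : IsCoprime a b) (h : a * b = c ^ n) :
    ∃ I : Ideal R, Ideal.span {a} = I ^ n :=
  exists_eq_pow_of_mul_eq_pow_of_coprime ((Ideal.isCoprime_span_singleton_iff a b).2 hab)
    (c := Ideal.span {c}) (by
      rw [Ideal.span_singleton_mul_span_singleton, h, Ideal.span_singleton_pow])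

/-- A labelling `x₁, x₂, x₃, x₄` of the roots of `quartic m` in `R`, by Vieta's formulas over the
resolvent quadratic `u ^ 2 + m * u + 1`: the quartic is `(X² - 2uX - 1)(X² + 2(m + u)X - 1)`, and
`x₃` is the image of `x₁` under the involution `x ↦ (1 - x) / (1 + x)`. Denominators are cleared so
that the structure transports along arbitrary ring homomorphisms. -/
@[ext]
structure QuarticRoots (m : ℤ) (R : Type*) [CommRing R] where
  (x₁ x₂ x₃ x₄ u : R)
  x₁_mul_x₂ : x₁ * x₂ = -1
  x₃_mul_x₄ : x₃ * x₄ = -1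
  x₁_add_x₂ : x₁ + x₂ = 2 * u
  x₃_add_x₄ : x₃ + x₄ = -2 * (m + u)
  one_add_x₁_mul_one_add_x₃ : (1 + x₁) * (1 + x₃) = 2
  quadratic_u : u ^ 2 + m * u + 1 = 0

namespace QuarticRoots

section CommRing

variable {m : ℤ} {R S : Type*} [CommRing R] [CommRing S] (r : QuarticRoots m R)

/-- The image of a labelling of the roots under a ring homomorphism. -/
def map (f : R →+* S) : QuarticRoots m S where
  x₁ := f r.x₁
  x₂ := f r.x₂
  x₃ := f r.x₃
  x₄ := f r.x₄
  u := f r.u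
  x₁_mul_x₂ := by simpa using congrArg f r.x₁_mul_x₂
  x₃_mul_x₄ := by simpa using congrArg f r.x₃_mul_x₄
  x₁_add_x₂ := by simpa [map_ofNat] using congrArg f r.x₁_add_x₂
  x₃_add_x₄ := by simpa [map_ofNat] using congrArg f r.x₃_add_x₄
  one_add_x₁_mul_one_add_x₃ := by simpa [map_ofNat] using congrArg f r.one_add_x₁_mul_one_add_x₃
  quadratic_u := by simpa using congrArg f r.quadratic_u

/-- The relabelling of the roots by the double transposition `(x₁ x₂)(x₃ x₄)`. -/
def swap₁₂ : QuarticRoots m R where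
  x₁ := r.x₂
  x₂ := r.x₁
  x₃ := r.x₄
  x₄ := r.x₃
  u := r.u
  x₁_mul_x₂ := by rw [mul_comm, r.x₁_mul_x₂]
  x₃_mul_x₄ := by rw [mul_comm, r.x₃_mul_x₄]
  x₁_add_x₂ := by rw [add_comm, r.x₁_add_x₂]
  x₃_add_x₄ := by rw [add_comm, r.x₃_add_x₄]
  one_add_x₁_mul_one_add_x₃ := by
    linear_combination -r.x₂ * r.x₄ * r.one_add_x₁_mul_one_add_x₃
      + (r.x₄ + r.x₃ * r.x₄) * r.x₁_mul_x₂ + (r.x₂ - 1) * r.x₃_mul_x₄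
  quadratic_u := r.quadratic_u

/-- The relabelling of the roots by the double transposition `(x₁ x₃)(x₂ x₄)`. -/
def swap₁₃ : QuarticRoots m R where
  x₁ := r.x₃
  x₂ := r.x₄
  x₃ := r.x₁
  x₄ := r.x₂
  u := -(m + r.u)
  x₁_mul_x₂ := r.x₃_mul_x₄
  x₃_mul_x₄ := r.x₁_mul_x₂
  x₁_add_x₂ := by linear_combination r.x₃_add_x₄
  x₃_add_x₄ := by linear_combination r.x₁_add_x₂
  one_add_x₁_mul_one_add_x₃ := by rw [mul_comm, r.one_add_x₁_mul_one_add_x₃]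
  quadratic_u := by linear_combination r.quadratic_u

theorem map_quartic_eq_prod : (quartic m).map (algebraMap ℤ R) =
    (X - C r.x₁) * (X - C r.x₂) * (X - C r.x₃) * (X - C r.x₄) := by
  have h₁₂ : (X - C r.x₁) * (X - C r.x₂) = X ^ 2 - C (2 * r.u) * X - 1 := by
    rw [← r.x₁_add_x₂, ← C_1, ← neg_eq_iff_eq_neg.2 r.x₁_mul_x₂]
    simp only [C_add, C_mul, C_neg]
    ring
  have h₃₄ : (X - C r.x₃) * (X - C r.x₄) = X ^ 2 + C (2 * (m + r.u)) * X - 1 := by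
    rw [show 2 * (m + r.u) = -(r.x₃ + r.x₄) by linear_combination r.x₃_add_x₄, ← C_1,
      ← neg_eq_iff_eq_neg.2 r.x₃_mul_x₄]
    simp only [C_add, C_mul, C_neg]
    ring
  rw [mul_assoc, h₁₂, h₃₄]
  have hu := congrArg C r.quadratic_u
  simp only [quartic, Polynomial.map_add, Polynomial.map_sub, Polynomial.map_mul,
    Polynomial.map_pow, map_X, Polynomial.map_one, Polynomial.map_intCast,
    Polynomial.map_ofNat, eq_intCast, map_intCast, C_add, C_mul, C_pow, C_1,
    Int.cast_mul, Int.cast_ofNat, C_ofNat, map_zero] at hu ⊢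
  linear_combination 4 * X ^ 2 * hu

theorem aeval_quartic_eq_prod (z : R) : aeval z (quartic m) =
    (z - r.x₁) * (z - r.x₂) * (z - r.x₃) * (z - r.x₄) := by
  rw [← eval_map_algebraMap, r.map_quartic_eq_prod]
  simp

theorem aeval_x₁ : aeval r.x₁ (quartic m) = 0 := by simp [r.aeval_quartic_eq_prod]

theorem prod_sub_two :
    (r.x₁ - 2) * ((r.x₂ - 2) * (r.x₃ - 2) * (r.x₄ - 2)) = 12 * m + 25 := by
  linear_combination aeval_quartic (m := m) (2 : R) - r.aeval_quartic_eq_prod 2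

theorem sq_x₁_sub_u : (r.x₁ - r.u) ^ 2 = r.u ^ 2 + 1 := by
  linear_combination r.x₁ * r.x₁_add_x₂ - r.x₁_mul_x₂

theorem sq_two_mul_u_add : (2 * r.u + m) ^ 2 = ((m ^ 2 - 4 : ℤ) : R) := by
  push_cast
  linear_combination 4 * r.quadratic_u

theorem aeval_derivative_quartic_x₁ : aeval r.x₁ (derivative (quartic m)) =
    2 * r.x₁ * (r.x₁ - r.x₂) * (2 * r.u + m) := by
  rw [← eval_map_algebraMap, ← derivative_map, r.map_quartic_eq_prod]
  simp only [derivative_mul, derivative_X_sub_C, eval_add, eval_mul, eval_sub, eval_X, eval_C,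
    one_mul, mul_one, sub_self, zero_mul, add_zero]
  linear_combination (r.x₁ - r.x₂) *
    (r.x₃_mul_x₄ - r.x₁ * r.x₃_add_x₄ + r.x₁ * r.x₁_add_x₂ - r.x₁_mul_x₂)

theorem sq_x₁_sub_x₂ : (r.x₁ - r.x₂) ^ 2 = -4 * m * r.u := by
  linear_combination (r.x₁ + r.x₂ + 2 * r.u) * r.x₁_add_x₂ - 4 * r.x₁_mul_x₂ + 4 * r.quadratic_u

/-- The units `x₁, x₃, u`, whose classes will be independent modulo powers. -/
def unit : Fin 3 → Rˣ :=
  ![.mkOfMulEqOne r.x₁ (-r.x₂) (by linear_combination -r.x₁_mul_x₂),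
    .mkOfMulEqOne r.x₃ (-r.x₄) (by linear_combination -r.x₃_mul_x₄),
    .mkOfMulEqOne r.u (-(m + r.u)) (by linear_combination -r.quadratic_u)]

/-- The elements `x₁ - 2, x₂ - 2, x₃ - 2`, which generate the `n`-th powers of ideals whose
classes span `(ℤ/nℤ)³`. -/
def subTwo : Fin 3 → R := ![r.x₁ - 2, r.x₂ - 2, r.x₃ - 2]

theorem isCoprime_x₁_sub_two {y n : ℕ} (hy : y.Coprime 35) (hyn : (12 * m + 25 : ℤ) = y ^ n) :
    IsCoprime (r.x₁ - 2) ((r.x₂ - 2) * (r.x₃ - 2) * (r.x₄ - 2)) := by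
  have h35 : IsCoprime (r.x₁ - 2) (5 * 7) := by
    have h := ((Nat.isCoprime_iff_coprime.2 hy).pow_left (m := n)).intCast (R := R)
    rw [← hyn] at h
    push_cast at h
    rw [← r.prod_sub_two, show (35 : R) = 5 * 7 by norm_num] at h
    exact h.of_mul_left_left
  have isCoprime_of_add_eq {a b d u v : R} (hd : IsCoprime a d) (h : a * u + b * v = d) :
      IsCoprime a b :=
    (IsCoprime.of_mul_add_left_right (h ▸ hd)).of_mul_right_left
  have h₂ : IsCoprime (r.x₁ - 2) (r.x₂ - 2) :=
    isCoprime_of_add_eq (d := 5) (u := -2) (v := -r.x₁) h35.of_mul_right_left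
      (by linear_combination -r.x₁_mul_x₂)
  have h₃ : IsCoprime (r.x₁ - 2) (r.x₃ - 2) :=
    isCoprime_of_add_eq (d := 7) (u := -3) (v := -(1 + r.x₁)) h35.of_mul_right_right
      (by linear_combination -r.one_add_x₁_mul_one_add_x₃)
  have h₄ : IsCoprime (r.x₁ - 2) (r.x₄ - 2) :=
    isCoprime_of_add_eq (d := 1) (u := 1) (v := r.x₁ - 1) isCoprime_one_right
      (by linear_combination r.x₄ * r.one_add_x₁_mul_one_add_x₃ - (1 + r.x₁) * r.x₃_mul_x₄)
  exact (h₂.mul_right h₃).mul_right h₄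

theorem exists_span_subTwo_eq_pow [IsDedekindDomain R] {y n : ℕ} (hy : y.Coprime 35)
    (hyn : (12 * m + 25 : ℤ) = y ^ n) (i : Fin 3) :
    ∃ I : Ideal R, Ideal.span {r.subTwo i} = I ^ n := by
  have exists_span_x₁ (s : QuarticRoots m R) : ∃ I : Ideal R, Ideal.span {s.x₁ - 2} = I ^ n :=
    exists_span_singleton_eq_pow_of_isCoprime (s.isCoprime_x₁_sub_two hy hyn)
      (c := (y : R)) (by rw [s.prod_sub_two]; exact mod_cast congrArg (Int.cast (R := R)) hyn)
  fin_cases i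
  · exact exists_span_x₁ r
  · exact exists_span_x₁ r.swap₁₂
  · exact exists_span_x₁ r.swap₁₃

end CommRing

section Field

variable {m : ℤ} {L : Type*} [Field L]

theorem exists_of_root (h2 : (2 : L) ≠ 0) {x : L} (hx : aeval x (quartic m) = 0) :
    ∃ r : QuarticRoots m L, r.x₁ = x := by
  rw [aeval_quartic] at hx
  have h4 : (4 : L) ≠ 0 := by rw [show (4 : L) = 2 * 2 by norm_num]; exact mul_ne_zero h2 h2
  have hx₀ : x ≠ 0 := by rintro rfl; simp at hx
  have hx₁ : 1 + x ≠ 0 := fun h ↦ h4 <| by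
    linear_combination hx - (x ^ 3 + (2 * m - 1) * x ^ 2 + (3 - 2 * m) * x - 3) * h
  have hx₂ : x - 1 ≠ 0 := fun h ↦ h4 <| by
    linear_combination hx - (x ^ 3 + (2 * m + 1) * x ^ 2 + (3 + 2 * m) * x + 3) * h
  refine ⟨⟨x, -1 / x, (1 - x) / (1 + x), (1 + x) / (x - 1), (x - 1 / x) / 2, ?_, ?_, ?_, ?_, ?_,
    ?_⟩, rfl⟩
  · field_simp
  · field_simp; ring
  · field_simp; ring
  · field_simp; linear_combination hx
  · field_simp; ring
  · field_simp; linear_combination hx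

theorem exists_ringOfIntegers_of_root [CharZero L] {x : L} (hx : aeval x (quartic m) = 0) :
    ∃ r : QuarticRoots m (𝓞 L), (r.x₁ : L) = x := by
  obtain ⟨r, rfl⟩ := exists_of_root two_ne_zero hx
  have exists_coe_eq {z : L} (hz : IsIntegral ℤ z) : ∃ a : 𝓞 L, (a : L) = z := ⟨⟨z, hz⟩, rfl⟩
  have isIntegral_x₁ (s : QuarticRoots m L) : IsIntegral ℤ s.x₁ :=
    ⟨quartic m, monic_quartic, s.aeval_x₁⟩
  have isIntegral_u : IsIntegral ℤ r.u := by
    refine ⟨X ^ 2 + C m * X + 1, by monicity!, ?_⟩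
    change aeval r.u _ = 0
    simpa using r.quadratic_u
  obtain ⟨x₁, h₁⟩ := exists_coe_eq (isIntegral_x₁ r)
  obtain ⟨x₂, h₂⟩ : ∃ a : 𝓞 L, (a : L) = r.x₂ := exists_coe_eq (isIntegral_x₁ r.swap₁₂)
  obtain ⟨x₃, h₃⟩ : ∃ a : 𝓞 L, (a : L) = r.x₃ := exists_coe_eq (isIntegral_x₁ r.swap₁₃)
  obtain ⟨x₄, h₄⟩ : ∃ a : 𝓞 L, (a : L) = r.x₄ := exists_coe_eq (isIntegral_x₁ r.swap₁₃.swap₁₂)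
  obtain ⟨u, hu⟩ := exists_coe_eq isIntegral_u
  refine ⟨⟨x₁, x₂, x₃, x₄, u, ?_, ?_, ?_, ?_, ?_, ?_⟩, h₁⟩ <;> apply RingOfIntegers.ext
  · simpa [h₁, h₂] using r.x₁_mul_x₂
  · simpa [h₃, h₄] using r.x₃_mul_x₄
  · simpa [h₁, h₂, hu, map_ofNat] using r.x₁_add_x₂
  · simpa [h₃, h₄, hu, map_ofNat] using r.x₃_add_x₄
  · simpa [h₁, h₃, map_ofNat] using r.one_add_x₁_mul_one_add_x₃
  · simpa [hu] using r.quadratic_u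

variable {s t : QuarticRoots m L}

theorem x₁_ne_zero (s : QuarticRoots m L) : s.x₁ ≠ 0 :=
  left_ne_zero_of_mul (s.x₁_mul_x₂ ▸ neg_ne_zero.2 one_ne_zero)

theorem u_ne_zero (s : QuarticRoots m L) : s.u ≠ 0 := by
  intro h
  simpa [h] using s.quadratic_u

theorem eq_of_x₁_eq (h2 : (2 : L) ≠ 0) (h : s.x₁ = t.x₁) : s = t := by
  have h₂ : s.x₂ = t.x₂ :=
    mul_left_cancel₀ s.x₁_ne_zero (by rw [s.x₁_mul_x₂, h, t.x₁_mul_x₂])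
  have h₃ : s.x₃ = t.x₃ := add_left_cancel <|
    mul_left_cancel₀ (left_ne_zero_of_mul (s.one_add_x₁_mul_one_add_x₃ ▸ h2))
      (by rw [s.one_add_x₁_mul_one_add_x₃, h, t.one_add_x₁_mul_one_add_x₃])
  have h₄ : s.x₄ = t.x₄ :=
    mul_left_cancel₀ (show s.x₃ ≠ 0 from s.swap₁₃.x₁_ne_zero)
      (by rw [s.x₃_mul_x₄, h₃, t.x₃_mul_x₄])
  have hu : s.u = t.u := mul_left_cancel₀ h2 (by rw [← s.x₁_add_x₂, h, h₂, t.x₁_add_x₂])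
  exact QuarticRoots.ext h h₂ h₃ h₄ hu

theorem aeval_derivative_quartic_x₁_ne_zero (s : QuarticRoots m L) (h2 : (2 : L) ≠ 0)
    (hm : (m : L) ≠ 0) (hm' : ((m ^ 2 - 4 : ℤ) : L) ≠ 0) :
    aeval s.x₁ (derivative (quartic m)) ≠ 0 := by
  have hx : s.x₁ - s.x₂ ≠ 0 := (pow_ne_zero_iff two_ne_zero).1 <| by
    rw [s.sq_x₁_sub_x₂, show (-4 : L) = -(2 * 2) by norm_num]
    exact mul_ne_zero (mul_ne_zero (neg_ne_zero.2 (mul_ne_zero h2 h2)) hm) s.u_ne_zero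
  have hu : 2 * s.u + m ≠ 0 := (pow_ne_zero_iff two_ne_zero).1 (by rwa [s.sq_two_mul_u_add])
  rw [s.aeval_derivative_quartic_x₁]
  exact mul_ne_zero (mul_ne_zero (mul_ne_zero h2 s.x₁_ne_zero) hx) hu

/-- The labelling `3, -1/3, -1/2, 2` of the roots where `2` is a root of the quartic. -/
def ofEqZero (h2 : (2 : L) ≠ 0) (h3 : (3 : L) ≠ 0) (h : (12 * m + 25 : L) = 0) :
    QuarticRoots m L where
  x₁ := 3
  x₂ := -1 / 3
  x₃ := -1 / 2
  x₄ := 2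
  u := 4 / 3
  x₁_mul_x₂ := by field_simp
  x₃_mul_x₄ := by field_simp
  x₁_add_x₂ := by field_simp; norm_num
  x₃_add_x₄ := by field_simp; linear_combination h
  one_add_x₁_mul_one_add_x₃ := by field_simp; norm_num
  quadratic_u := by field_simp; linear_combination h

theorem star_x₁ (hm : 2 < m) (s : QuarticRoots m ℂ) : star s.x₁ = s.x₁ := by
  have hm' : (2 : ℝ) < m := mod_cast hm
  have hu : star s.u = s.u := by
    have := star_eq_of_sq_eq_ofReal (z := 2 * s.u + m) (r := (m : ℝ) ^ 2 - 4) (by nlinarith)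
      (by rw [s.sq_two_mul_u_add]; push_cast; rfl)
    simpa using this
  have hre : ((s.u.re : ℝ) : ℂ) = s.u := Complex.conj_eq_iff_re.1 hu
  have := star_eq_of_sq_eq_ofReal (z := s.x₁ - s.u) (r := s.u.re ^ 2 + 1) (by positivity)
    (by rw [s.sq_x₁_sub_u]; push_cast; rw [hre])
  simpa only [star_sub, hu, sub_left_inj] using this

end Field

section NumberField

variable {m : ℤ} {K : Type*} [Field K]

theorem aeval_coe_x₁ (r : QuarticRoots m (𝓞 K)) : aeval (r.x₁ : K) (quartic m) = 0 :=
  (r.map (algebraMap (𝓞 K) K)).aeval_x₁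

variable [NumberField K]

theorem minpoly_x₁ (hm : 2 < m) (r : QuarticRoots m (𝓞 K)) : minpoly ℤ r.x₁ = quartic m := by
  apply map_injective (algebraMap ℤ ℚ) (algebraMap ℤ ℚ).injective_int
  rw [← minpoly.isIntegrallyClosed_eq_field_fractions ℚ K (RingOfIntegers.isIntegral r.x₁)]
  exact minpoly_eq_map_quartic hm r.aeval_coe_x₁

theorem isTotallyReal_of_adjoin_x₁ {r : QuarticRoots m (𝓞 K)}
    (hr : Algebra.adjoin ℚ {(r.x₁ : K)} = ⊤) (hm : 2 < m) : IsTotallyReal K := by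
  have hx₁ : (r.x₁ : K) ∈ maximalRealSubfield K := fun φ ↦
    (r.map (φ.comp (algebraMap (𝓞 K) K))).star_x₁ hm
  rw [← maximalRealSubfield_eq_top_iff_isTotallyReal, eq_top_iff]
  intro z _
  have hz : z ∈ Algebra.adjoin ℚ {(r.x₁ : K)} := hr ▸ trivial
  induction hz using Algebra.adjoin_induction with
  | mem _ hy => exact hy ▸ hx₁
  | algebraMap a => exact SubfieldClass.ratCast_mem _ a
  | add _ _ _ _ ha hb => exact add_mem (ha trivial) (hb trivial)
  | mul _ _ _ _ ha hb => exact mul_mem (ha trivial) (hb trivial)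

variable {r : QuarticRoots m (𝓞 K)} (hr : Algebra.adjoin ℚ {(r.x₁ : K)} = ⊤) (hm : 2 < m)
include hr

theorem algEquiv_sq_eq_one (σ : K ≃ₐ[ℚ] K) : σ ^ 2 = 1 := by
  let s := r.map (algebraMap (𝓞 K) K)
  let t := s.map (σ : K →+* K)
  have hroots : t.x₁ = s.x₁ ∨ t.x₁ = s.x₂ ∨ t.x₁ = s.x₃ ∨ t.x₁ = s.x₄ := by
    simpa [s.aeval_quartic_eq_prod, sub_eq_zero, or_assoc] using t.aeval_x₁
  have hsq : σ (σ (r.x₁ : K)) = r.x₁ := by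
    change σ t.x₁ = s.x₁
    rcases hroots with h | h | h | h
    · rw [h]; exact h
    · rw [h]
      exact congrArg x₂ (eq_of_x₁_eq (t := s.swap₁₂) two_ne_zero h)
    · rw [h]
      exact congrArg x₃ (eq_of_x₁_eq (t := s.swap₁₃) two_ne_zero h)
    · rw [h]
      exact congrArg x₄ (eq_of_x₁_eq (t := s.swap₁₃.swap₁₂) two_ne_zero h)
  have hext : ((σ ^ 2 : K ≃ₐ[ℚ] K) : K →ₐ[ℚ] K) = ((1 : K ≃ₐ[ℚ] K) : K →ₐ[ℚ] K) :=
    AlgHom.ext_of_adjoin_eq_top hr (by simpa [sq] using hsq)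
  exact AlgEquiv.coe_toAlgHom_injective hext

theorem isSplittingField : ((quartic m).map (algebraMap ℤ ℚ)).IsSplittingField ℚ K := by
  have hroot := (r.map (algebraMap (𝓞 K) K)).aeval_x₁
  constructor
  · rw [Polynomial.map_map, ← IsScalarTower.algebraMap_eq,
      (r.map (algebraMap (𝓞 K) K)).map_quartic_eq_prod]
    exact (((Splits.X_sub_C _).mul (Splits.X_sub_C _)).mul (Splits.X_sub_C _)).mul
      (Splits.X_sub_C _)
  · rw [eq_top_iff, ← hr]
    apply Algebra.adjoin_mono
    rw [Set.singleton_subset_iff, mem_rootSet, aeval_map_algebraMap]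
    exact ⟨(monic_quartic.map _).ne_zero, hroot⟩

include hm

theorem finrank_eq_four : Module.finrank ℚ K = 4 := by
  have hx : IsIntegral ℚ (r.x₁ : K) := Algebra.IsIntegral.isIntegral _
  rw [(PowerBasis.ofAdjoinEqTop hx hr).finrank, ← PowerBasis.natDegree_minpoly,
    PowerBasis.ofAdjoinEqTop_gen, minpoly_eq_map_quartic hm r.aeval_coe_x₁,
    monic_quartic.natDegree_map, natDegree_quartic]

theorem isGalois : IsGalois ℚ K :=
  have := isSplittingField hr
  .of_separable_splitting_field (irreducible_map_quartic hm).separable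

theorem nonempty_mulEquiv_zmod_two_prod :
    Nonempty ((K ≃ₐ[ℚ] K) ≃* Multiplicative (ZMod 2 × ZMod 2)) := by
  have := isGalois hr hm
  have hcard : Nat.card (K ≃ₐ[ℚ] K) = 4 := by
    rw [IsGalois.card_aut_eq_finrank, finrank_eq_four hr hm]
  have : Nontrivial (K ≃ₐ[ℚ] K) := Finite.one_lt_card_iff_nontrivial.1 (by omega)
  have : IsKleinFour (K ≃ₐ[ℚ] K) := ⟨hcard, ((Nat.dvd_prime Nat.prime_two).1
    (Monoid.exponent_dvd_of_forall_pow_eq_one (algEquiv_sq_eq_one hr))).resolve_left fun h ↦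
      not_subsingleton (K ≃ₐ[ℚ] K) (Monoid.exp_eq_one_iff.1 h)⟩
  exact IsKleinFour.nonempty_mulEquiv

theorem units_rank_eq_three : Units.rank K = 3 := by
  have := isTotallyReal_of_adjoin_x₁ hr hm
  rw [Units.rank, InfinitePlace.card_eq_nrRealPlaces_add_nrComplexPlaces,
    IsTotallyReal.nrComplexPlaces_eq_zero, add_zero, ← IsTotallyReal.finrank, finrank_eq_four hr hm]

end NumberField

section Monomial

variable {m : ℤ} {R S L : Type*} [CommRing R] [CommRing S] [Field L]

/-- The product of powers of `x₁, x₃, u` with exponents `e` and of `x₁ - 2, x₂ - 2, x₃ - 2` with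
exponents `f`. -/
def monomial (r : QuarticRoots m R) (e f : Fin 3 → ℕ) : R :=
  (∏ i, (r.unit i : R) ^ e i) * ∏ i, r.subTwo i ^ f i

theorem monomial_eq (r : QuarticRoots m R) (e f : Fin 3 → ℕ) : r.monomial e f =
    r.x₁ ^ e 0 * r.x₃ ^ e 1 * r.u ^ e 2 *
      ((r.x₁ - 2) ^ f 0 * (r.x₂ - 2) ^ f 1 * (r.x₃ - 2) ^ f 2) := by
  simp only [monomial, unit, subTwo, Fin.prod_univ_three, Matrix.cons_val]
  rfl

theorem map_monomial (r : QuarticRoots m R) (φ : R →+* S) (e f : Fin 3 → ℕ) :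
    φ (r.monomial e f) = (r.map φ).monomial e f := by
  simp [monomial_eq, map, map_ofNat]

variable (h2 : (2 : L) ≠ 0) (h3 : (3 : L) ≠ 0) (h : (12 * m + 25 : L) = 0) (e f : Fin 3 → ℕ)

theorem monomial_ofEqZero : (ofEqZero h2 h3 h).monomial e f =
    (-1) ^ (e 1 + f 1 + f 2) * ∏ i, ((![2, 3, 5, 7] : Fin 4 → ℕ) i : L) ^
      (![2 * e 2 - e 1 - f 2, e 0 - e 2 - f 1, f 2, f 1] : Fin 4 → ℤ) i := by
  have hx₁ : (3 - 2 : L) = 1 := by norm_num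
  have hu : (4 : L) = 2 ^ 2 := by norm_num
  have hx₂ : (-1 / 3 - 2 : L) = -1 * 7 / 3 := by field_simp; norm_num
  have hx₃ : (-1 / 2 - 2 : L) = -1 * 5 / 2 := by field_simp; norm_num
  simp only [monomial_eq, ofEqZero, Fin.prod_univ_four, Matrix.cons_val, Nat.cast_ofNat,
    zpow_sub₀ h2, zpow_sub₀ h3, zpow_mul, zpow_natCast, hx₁, hx₂, hx₃, hu, one_pow,
    div_pow, mul_pow, pow_add]
  field_simp

theorem monomial_swap₁₃_ofEqZero (hf : f 1 = 0) : (ofEqZero h2 h3 h).swap₁₃.monomial e f =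
    (-1) ^ (e 0 + f 0) * ∏ i, ((![2, 3, 5, 7] : Fin 4 → ℕ) i : L) ^
      (![-(e 0 + 2 * e 2 + f 0), e 1 + e 2, f 0, 0] : Fin 4 → ℤ) i := by
  have hx₃ : (3 - 2 : L) = 1 := by norm_num
  have hx₁ : (-1 / 2 - 2 : L) = -1 * 5 / 2 := by field_simp; norm_num
  have hu : -((m : L) + 4 / 3) = 3 / 2 ^ 2 := by field_simp; linear_combination -h
  simp only [monomial_eq, swap₁₃, ofEqZero, Fin.prod_univ_four, Matrix.cons_val, Nat.cast_ofNat,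
    zpow_neg, zpow_add₀ h2, zpow_add₀ h3, zpow_mul, zpow_natCast, hx₁, hx₃, hu, hf, one_pow,
    div_pow, mul_pow, pow_add]
  field_simp

theorem monomial_swap₁₂_swap₁₃_ofEqZero : (ofEqZero h2 h3 h).swap₁₃.swap₁₂.monomial e 0 =
    (-1) ^ (e 1) * ∏ i, ((![2, 3, 5, 7] : Fin 4 → ℕ) i : L) ^
      (![e 0 - 2 * e 2, e 2 - e 1, 0, 0] : Fin 4 → ℤ) i := by
  have hu : -((m : L) + 4 / 3) = 3 / 2 ^ 2 := by field_simp; linear_combination -h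
  simp only [monomial_eq, swap₁₃, swap₁₂, ofEqZero, Fin.prod_univ_four, Matrix.cons_val,
    Nat.cast_ofNat, zpow_sub₀ h2, zpow_sub₀ h3, zpow_mul, zpow_natCast, hu, div_pow, Pi.zero_apply,
    pow_zero, mul_one]
  field_simp

end Monomial

theorem cast_twelve_mul_add_eq_zero {m : ℤ} {n y q : ℕ} (hn : n ≠ 0)
    (hyn : (12 * m + 25 : ℤ) = y ^ n) (hqy : q ∣ y) : (12 * m + 25 : ZMod q) = 0 := by
  have h := congrArg (Int.cast (R := ZMod q)) hyn
  push_cast at h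
  rw [h, (ZMod.natCast_eq_zero_iff y q).2 hqy, zero_pow hn]

section ClassGroup

variable {m : ℤ} {K : Type*} [Field K] [NumberField K] {r : QuarticRoots m (𝓞 K)}
  (hr : Algebra.adjoin ℚ {(r.x₁ : K)} = ⊤) (hm : 2 < m)
include hr hm

theorem exists_ringHom_map_eq {q : ℕ} [Fact q.Prime] (hq : 7 < q)
    (hqm : (12 * m + 25 : ZMod q) = 0) (t : QuarticRoots m (ZMod q)) :
    ∃ ψ : 𝓞 K →+* ZMod q, r.map ψ = t := by
  have h2 : (2 : ZMod q) ≠ 0 := mod_cast CharP.cast_ne_zero_of_ne_of_prime _ Nat.prime_two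
    (by omega : q ≠ 2)
  have h5 : (5 : ZMod q) ≠ 0 := mod_cast CharP.cast_ne_zero_of_ne_of_prime _ Nat.prime_five
    (by omega : q ≠ 5)
  have h7 : (7 : ZMod q) ≠ 0 := mod_cast CharP.cast_ne_zero_of_ne_of_prime _ Nat.prime_seven
    (by omega : q ≠ 7)
  have hm₀ : (m : ZMod q) ≠ 0 := fun h ↦ pow_ne_zero 2 h5 (by linear_combination hqm - 12 * h)
  have hm₄ : ((m ^ 2 - 4 : ℤ) : ZMod q) ≠ 0 := fun h ↦ pow_ne_zero 2 h7 <| by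
    push_cast at h
    linear_combination 144 * h - (12 * m - 25) * hqm
  obtain ⟨ψ, hψ⟩ := exists_ringHom_zmod_eq_of_simple_root hr (c := t.x₁)
    (by rw [minpoly_x₁ hm, t.aeval_x₁])
    (by rw [minpoly_x₁ hm]; exact t.aeval_derivative_quartic_x₁_ne_zero h2 hm₀ hm₄)
  exact ⟨ψ, eq_of_x₁_eq h2 hψ⟩

variable {Q : Finset ℕ} (hQ : ∀ q ∈ Q, 7 < q ∧ (12 * m + 25 : ZMod q) = 0) {p : ℕ}
  (hdet : DetectsPowers Q ![2, 3, 5, 7] p) {s : ℕ} {e f : Fin 3 → ℕ} {γ : 𝓞 K}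
include hQ hdet

theorem dvd_of_monomial_eq_pow (hγ : (-1) ^ s * r.monomial e f = γ ^ p) {s' : ℕ} {ε : Fin 4 → ℤ}
    (ht : ∀ (q : ℕ) [Fact q.Prime], (2 : ZMod q) ≠ 0 → (3 : ZMod q) ≠ 0 →
      (12 * m + 25 : ZMod q) = 0 → ∃ t : QuarticRoots m (ZMod q), t.monomial e f =
        (-1) ^ s' * ∏ i, ((![2, 3, 5, 7] : Fin 4 → ℕ) i : ZMod q) ^ ε i) (i : Fin 4) :
    (p : ℤ) ∣ ε i := by
  refine hdet (s + s') ε (fun q hq _ ↦ ?_) i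
  obtain ⟨hq7, hqm⟩ := hQ q hq
  obtain ⟨t, ht⟩ := ht q
    (mod_cast CharP.cast_ne_zero_of_ne_of_prime _ Nat.prime_two (by omega : q ≠ 2))
    (mod_cast CharP.cast_ne_zero_of_ne_of_prime _ Nat.prime_three (by omega : q ≠ 3)) hqm
  obtain ⟨ψ, rfl⟩ := exists_ringHom_map_eq hr hm hq7 hqm t
  refine ⟨ψ γ, ?_⟩
  rw [← map_pow, ← hγ, map_mul, map_monomial, ht, map_pow, map_neg, map_one, pow_add, mul_assoc]

theorem dvd_and_eq_zero_of_monomial_eq_pow (hf : ∀ i, f i < p)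
    (hγ : (-1) ^ s * r.monomial e f = γ ^ p) : (∀ i, p ∣ e i) ∧ ∀ i, f i = 0 := by
  have eq_zero {i : Fin 3} (h : (p : ℤ) ∣ f i) : f i = 0 :=
    Nat.eq_zero_of_dvd_of_lt (Int.natCast_dvd_natCast.1 h) (hf i)
  have dvd₁ := dvd_of_monomial_eq_pow hr hm hQ hdet hγ fun q _ h2 h3 h ↦
    ⟨_, monomial_ofEqZero h2 h3 h e f⟩
  have hf₁ : f 1 = 0 := eq_zero (dvd₁ 3)
  have hf₂ : f 2 = 0 := eq_zero (dvd₁ 2)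
  have hf₀ : f 0 = 0 := eq_zero <| dvd_of_monomial_eq_pow hr hm hQ hdet hγ (fun q _ h2 h3 h ↦
    ⟨_, monomial_swap₁₃_ofEqZero h2 h3 h e f hf₁⟩) 2
  obtain rfl : f = 0 := by
    ext i
    fin_cases i
    exacts [hf₀, hf₁, hf₂]
  have dvd₃ := dvd_of_monomial_eq_pow hr hm hQ hdet hγ fun q _ h2 h3 h ↦
    ⟨_, monomial_swap₁₂_swap₁₃_ofEqZero h2 h3 h e⟩
  have h₀₂ : (p : ℤ) ∣ e 0 - e 2 := by simpa using dvd₁ 1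
  have h₀₂' : (p : ℤ) ∣ e 0 - 2 * e 2 := by simpa using dvd₃ 0
  have h₂₁ : (p : ℤ) ∣ e 2 - e 1 := by simpa using dvd₃ 1
  have h₂ : (p : ℤ) ∣ e 2 := by simpa [two_mul] using dvd_sub h₀₂ h₀₂'
  refine ⟨fun i ↦ Int.natCast_dvd_natCast.1 ?_, fun _ ↦ rfl⟩
  fin_cases i
  exacts [(dvd_sub_left h₂).1 h₀₂, (dvd_sub_right h₂).1 h₂₁, h₂]

omit hQ hdet in
theorem hasZModRankGE_classGroup {n y : ℕ} (hn : n ≠ 0) (hy : y.Coprime 35)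
    (hyn : (12 * m + 25 : ℤ) = y ^ n) (hQ : ∀ q ∈ Q, 7 < q ∧ q ∣ y)
    (hdet : ∀ p : ℕ, p.Prime → p ∣ n → DetectsPowers Q ![2, 3, 5, 7] p) :
    HasZModRankGE (ClassGroup (𝓞 K)) n 3 := by
  have := isTotallyReal_of_adjoin_x₁ hr hm
  have hQm : ∀ q ∈ Q, 7 < q ∧ (12 * m + 25 : ZMod q) = 0 := fun q hq ↦
    ⟨(hQ q hq).1, cast_twelve_mul_add_eq_zero hn hyn (hQ q hq).2⟩
  refine hasZModRankGE_classGroup_ringOfIntegers (w := r.unit) (a := r.subTwo)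
    (by rw [Fintype.card_fin, units_rank_eq_three hr hm]) hn ?_
    (r.exists_span_subTwo_eq_pow hy hyn) fun p hp hpn ζ hζ e f hf γ hγ ↦ ?_
  · have x₁_sub_two_ne_zero (t : QuarticRoots m (𝓞 K)) : t.x₁ - 2 ≠ 0 :=
      left_ne_zero_of_mul (t.prod_sub_two.trans_ne (by norm_cast; omega))
    intro i
    fin_cases i
    exacts [x₁_sub_two_ne_zero r, x₁_sub_two_ne_zero r.swap₁₂, x₁_sub_two_ne_zero r.swap₁₃]
  · obtain ⟨v⟩ : Nonempty (InfinitePlace K) := inferInstance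
    obtain ⟨s, hs⟩ : ∃ s : ℕ, (ζ : 𝓞 K) = (-1) ^ s := by
      rcases torsion_eq_one_or_neg_one (InfinitePlace.embedding_of_isReal
        (IsTotallyReal.isReal v)) hζ with rfl | rfl
      exacts [⟨0, by simp⟩, ⟨1, by simp⟩]
    exact dvd_and_eq_zero_of_monomial_eq_pow hr hm hQm (hdet p hp hpn) hf
      (by rw [monomial, ← hs, ← mul_assoc, hγ])

end ClassGroup

end QuarticRoots

section QuarticFields

theorem sq_ne_sq_sub_four {m : ℤ} (hm : 2 < m) (z : ℤ) : z ^ 2 ≠ m ^ 2 - 4 := by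
  intro h
  have hlt : |z| < m := abs_lt_of_sq_lt_sq (by omega) (by omega)
  nlinarith [sq_abs z, abs_nonneg z]

theorem eq_of_algEquiv_of_normal {F E : Type*} [Field F] [Field E] [Algebra F E]
    {K K' : IntermediateField F E} (_ : Normal F K) (e : K ≃ₐ[F] K') : K = K' := by
  rw [← AlgHom.fieldRange_of_normal (K'.val.comp (e : K →ₐ[F] K'))]
  ext z
  exact ⟨fun ⟨w, hw⟩ ↦ hw ▸ (e w).2, fun hz ↦ ⟨e.symm ⟨z, hz⟩, by simp⟩⟩

/-- The parameters of the family: `y` subject to the congruences of the theorem and divisible by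
all `q ∈ Q`, and the `m` for which the polynomial of the theorem is `quartic m`. -/
structure IsAdmissible (n : ℕ) (Q : Finset ℕ) (y : ℕ) (m : ℤ) : Prop where
  mod_twelve : y % 12 = 1
  not_five_dvd : ¬5 ∣ y
  not_seven_dvd : ¬7 ∣ y
  dvd : ∀ q ∈ Q, q ∣ y
  eq_pow : (12 * m + 25 : ℤ) = y ^ n
  two_lt : 2 < m

variable {n y : ℕ} {Q Q' : Finset ℕ} {m : ℤ}

theorem IsAdmissible.coprime (h : IsAdmissible n Q y m) : y.Coprime 35 :=
  Nat.Coprime.mul_right (m := 5) (n := 7)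
    (((Nat.prime_five.coprime_iff_not_dvd).2 h.not_five_dvd).symm)
    (((Nat.prime_seven.coprime_iff_not_dvd).2 h.not_seven_dvd).symm)

theorem IsAdmissible.quartic_map_eq (h : IsAdmissible n Q y m) :
    (quartic m).map (algebraMap ℤ ℚ) = X ^ 4 + C (((y : ℚ) ^ n - 25) / 6) * X ^ 3 + C 2 * X ^ 2 -
      C (((y : ℚ) ^ n - 25) / 6) * X + 1 := by
  have hy : ((y : ℚ) ^ n - 25) / 6 = 2 * m := by
    have : (12 * m + 25 : ℚ) = y ^ n := mod_cast h.eq_pow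
    linear_combination -this / 6
  rw [hy]
  simp [quartic, C_ofNat]

theorem exists_isAdmissible (hn : 1 < n) (hQ : ∀ q ∈ Q, q.Prime ∧ 7 < q) :
    ∃ y m, IsAdmissible n Q y m := by
  have hcop : (11 * ∏ q ∈ Q, q).Coprime 420 := by
    refine Nat.Coprime.mul_left (by norm_num) (Nat.Coprime.prod_left fun q hq ↦ ?_)
    obtain ⟨hp, hq7⟩ := hQ q hq
    rw [show 420 = 2 ^ 2 * 3 * 5 * 7 by norm_num]
    have coprime_of_le {l : ℕ} (hl : l.Prime) (h7 : l ≤ 7) : q.Coprime l :=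
      (Nat.coprime_primes hp hl).2 (by omega)
    exact (((coprime_of_le Nat.prime_two (by norm_num)).pow_right 2 |>.mul_right
      (coprime_of_le Nat.prime_three (by norm_num))).mul_right
      (coprime_of_le Nat.prime_five (by norm_num))).mul_right
      (coprime_of_le Nat.prime_seven (by norm_num))
  obtain ⟨y, hy⟩ : ∃ y, y = (11 * ∏ q ∈ Q, q) ^ Nat.totient 420 := ⟨_, rfl⟩
  have htot : Nat.totient 420 ≠ 0 := (Nat.totient_pos.2 (by norm_num)).ne'
  have hdvd : 11 * ∏ q ∈ Q, q ∣ y := hy ▸ dvd_pow_self _ htot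
  have hmod : y % 420 = 1 := hy ▸ Nat.ModEq.pow_totient hcop
  have hy13 : 13 ≤ y := by
    have : 11 ∣ y := (dvd_mul_right _ _).trans hdvd
    omega
  have hyn : 13 ^ 2 ≤ y ^ n :=
    (Nat.pow_le_pow_left hy13 2).trans (Nat.pow_le_pow_right (by omega) hn)
  have hyn' : y ^ n % 12 = 1 := by
    rw [Nat.pow_mod, show y % 12 = 1 by omega, one_pow, Nat.one_mod]
  refine ⟨y, ((y ^ n : ℕ) - 25) / 12, by omega, by omega, by omega,
    fun q hq ↦ (Finset.dvd_prod_of_mem _ hq).trans ((dvd_mul_left _ _).trans hdvd), ?_, by omega⟩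
  rw [← Nat.cast_pow]
  omega

/-- The subfields of `ℂ` generated by a root of `quartic m`, for admissible parameters. -/
def quarticFields (n : ℕ) (Q : Finset ℕ) : Set (IntermediateField ℚ ℂ) :=
  {K | ∃ (_ : NumberField K) (y : ℕ) (m : ℤ) (r : QuarticRoots m (𝓞 K)),
    IsAdmissible n Q y m ∧ Algebra.adjoin ℚ {(r.x₁ : K)} = ⊤}

theorem quarticFields_anti (h : Q ⊆ Q') : quarticFields n Q' ⊆ quarticFields n Q :=
  fun _ ⟨hK, y, m, r, had, hr⟩ ↦
    ⟨hK, y, m, r, { had with dvd := fun q hq ↦ had.dvd q (h hq) }, hr⟩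

theorem quarticFields_nonempty (hn : 1 < n) (hQ : ∀ q ∈ Q, q.Prime ∧ 7 < q) :
    (quarticFields n Q).Nonempty := by
  obtain ⟨y, m, had⟩ := exists_isAdmissible hn hQ
  obtain ⟨x, hx⟩ := IsAlgClosed.exists_aeval_eq_zero ℂ (quartic m) (by
    rw [degree_eq_natDegree monic_quartic.ne_zero, natDegree_quartic]; norm_num)
  have hint : IsIntegral ℚ x := IsIntegral.tower_top (R := ℤ) ⟨quartic m, monic_quartic, hx⟩
  have hfin : FiniteDimensional ℚ (IntermediateField.adjoin ℚ {x}) :=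
    IntermediateField.adjoin.finiteDimensional hint
  have hgen : aeval (IntermediateField.AdjoinSimple.gen ℚ x) (quartic m) = 0 :=
    (algebraMap (IntermediateField.adjoin ℚ {x}) ℂ).injective <| by
      rw [← aeval_algebraMap_apply, IntermediateField.AdjoinSimple.algebraMap_gen, hx, map_zero]
  obtain ⟨r, hr⟩ := QuarticRoots.exists_ringOfIntegers_of_root hgen
  refine ⟨IntermediateField.adjoin ℚ {x}, ⟨⟩, y, m, r, had, ?_⟩
  rw [hr, ← IntermediateField.adjoin.powerBasis_gen hint]
  exact (IntermediateField.adjoin.powerBasis hint).adjoin_gen_eq_top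

theorem exists_prime_isEmpty_ringHom_zmod {R : Type*} [CommRing R] (hm : 2 < m)
    (r : QuarticRoots m R) (B : ℕ) : ∃ q : ℕ, q.Prime ∧ B < q ∧ IsEmpty (R →+* ZMod q) := by
  obtain ⟨q, hq, hB, hsq⟩ := exists_prime_forall_pow_ne Nat.prime_two (sq_ne_sq_sub_four hm) B
  exact ⟨q, hq, hB, ⟨fun ψ ↦ hsq _ (r.map ψ).sq_two_mul_u_add⟩⟩

theorem nonempty_ringHom_zmod {K : IntermediateField ℚ ℂ} (hK : K ∈ quarticFields n Q) (hn : n ≠ 0)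
    {q : ℕ} (hq : q.Prime) (hq7 : 7 < q) (hqQ : q ∈ Q) : Nonempty (𝓞 K →+* ZMod q) := by
  obtain ⟨_, y, m, r, had, hr⟩ := hK
  have : Fact q.Prime := ⟨hq⟩
  have h2 : (2 : ZMod q) ≠ 0 := mod_cast CharP.cast_ne_zero_of_ne_of_prime _ Nat.prime_two
    (by omega : q ≠ 2)
  have h3 : (3 : ZMod q) ≠ 0 := mod_cast CharP.cast_ne_zero_of_ne_of_prime _ Nat.prime_three
    (by omega : q ≠ 3)
  have hqm := QuarticRoots.cast_twelve_mul_add_eq_zero hn had.eq_pow (had.dvd q hqQ)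
  obtain ⟨ψ, -⟩ := QuarticRoots.exists_ringHom_map_eq hr had.two_lt hq7 hqm (.ofEqZero h2 h3 hqm)
  exact ⟨ψ⟩

theorem infinite_quarticFields (hn : 1 < n) (hQ : ∀ q ∈ Q, q.Prime ∧ 7 < q) :
    (quarticFields n Q).Infinite := by
  classical
  intro hfin
  -- Putting into `Q` a prime without degree-one factor for each known field yields a new field.
  have exists_prime (K) (hK : K ∈ quarticFields n Q) :
      ∃ q : ℕ, q.Prime ∧ 7 < q ∧ IsEmpty (𝓞 K →+* ZMod q) :=
    have ⟨_, _, _, r, had, _⟩ := hK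
    exists_prime_isEmpty_ringHom_zmod had.two_lt r 7
  choose! q hq hq7 hqK using exists_prime
  obtain ⟨K, hK'⟩ := quarticFields_nonempty (Q := Q ∪ hfin.toFinset.image q) hn fun l hl ↦ by
    rcases Finset.mem_union.1 hl with hl | hl
    · exact hQ l hl
    · obtain ⟨K, hK, rfl⟩ := Finset.mem_image.1 hl
      rw [hfin.mem_toFinset] at hK
      exact ⟨hq K hK, hq7 K hK⟩
  have hK := quarticFields_anti Finset.subset_union_left hK'
  obtain ⟨ψ⟩ := nonempty_ringHom_zmod hK' (by omega) (hq K hK) (hq7 K hK)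
    (Finset.mem_union_right _ (Finset.mem_image_of_mem q (hfin.mem_toFinset.2 hK)))
  exact (hqK K hK).false ψ

end QuarticFields

/-- **Real biquadratic fields with large class group (`G = (ℤ/2ℤ)²`).**
For every integer `n > 1` there are infinitely many pairwise non-isomorphic totally real
biquadratic fields `K`, each a splitting field of an irreducible polynomial
`x⁴ + ((yⁿ - 25)/6)x³ + 2x² - ((yⁿ - 25)/6)x + 1` with `y` a positive integer,
`y ≡ 1 (mod 12)`, `5 ∤ y` and `7 ∤ y`, such that `rank_n Cl(K) ≥ 3`. -/
theorem real_biquadratic_large_class_group (n : ℕ) (hn : 1 < n) :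
    ∃ S : Set (IntermediateField ℚ ℂ), S.Infinite ∧
      (∀ K ∈ S, ∀ K' ∈ S, K ≠ K' → IsEmpty (K ≃+* K')) ∧
      ∀ K ∈ S, ∃ y : ℕ, 0 < y ∧ y % 12 = 1 ∧ ¬ (5 ∣ y) ∧ ¬ (7 ∣ y) ∧
        (let P : Polynomial ℚ := X ^ 4 + C (((y : ℚ) ^ n - 25) / 6) * X ^ 3 + C 2 * X ^ 2 -
          C (((y : ℚ) ^ n - 25) / 6) * X + 1
         Irreducible P ∧ P.IsSplittingField ℚ K) ∧
        NumberField K ∧ Module.finrank ℚ K = 4 ∧ IsGalois ℚ K ∧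
        Nonempty ((K ≃ₐ[ℚ] K) ≃* Multiplicative (ZMod 2 × ZMod 2)) ∧
        TotallyReal K ∧
        HasZModRankGE (ClassGroup (𝓞 K)) n 3 := by
  obtain ⟨Q, hQ, hdet⟩ := exists_detectsPowers_of_dvd (r := ![2, 3, 5, 7])
    (by simp [Fin.forall_fin_succ, Nat.prime_two, Nat.prime_three, Nat.prime_five,
      Nat.prime_seven]) (by decide) (by omega : n ≠ 0) 7
  refine ⟨quarticFields n Q, infinite_quarticFields hn hQ, ?_, ?_⟩
  · rintro K ⟨_, y, m, r, had, hr⟩ K' - hne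
    have hnormal := (QuarticRoots.isGalois hr had.two_lt).to_normal
    exact ⟨fun e ↦ hne (eq_of_algEquiv_of_normal hnormal e.toRatAlgEquiv)⟩
  · rintro K ⟨hK, y, m, r, had, hr⟩
    have hm := had.two_lt
    have := QuarticRoots.isTotallyReal_of_adjoin_x₁ hr hm
    refine ⟨y, by have := had.mod_twelve; omega, had.mod_twelve, had.not_five_dvd,
      had.not_seven_dvd, ?_, hK, QuarticRoots.finrank_eq_four hr hm, QuarticRoots.isGalois hr hm,
      QuarticRoots.nonempty_mulEquiv_zmod_two_prod hr hm, fun φ x ↦ ?_,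
      QuarticRoots.hasZModRankGE_classGroup hr hm (by omega) had.coprime had.eq_pow
        (fun q hq ↦ ⟨(hQ q hq).2, had.dvd q hq⟩) hdet⟩
    · rw [← had.quartic_map_eq]
      exact ⟨irreducible_map_quartic hm, QuarticRoots.isSplittingField hr⟩
    · exact Complex.conj_eq_iff_im.1
        (RingHom.congr_fun (IsTotallyReal.complexEmbedding_isReal φ) x)
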